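/- For every integer d ≥ 1, the function k ↦ dim_ℚ H_{2d}(C_k(S^{2d}); ℚ) is not monotonically increasing: there exists k ≥ 1 with dim_ℚ H_{2d}(C_k(S^{2d}); ℚ) > dim_ℚ H_{2d}(C_{k+1}(S^{2d}); ℚ). -/

import Mathlib

open CategoryTheory

/-- The singular chain complex functor with coefficients in a commutative ring `R`:
the levelwise free `R`-module on the singular simplicial set of a space, turned into
a chain complex via the alternating face map complex. -/
noncomputable def singularChainComplexFunctor (R : Type) [CommRing R] :
    TopCat.{0} ⥤ ChainComplex (ModuleCat.{0} R) ℕ :=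
  TopCat.toSSet ⋙ ((SimplicialObject.whiskering _ _).obj (ModuleCat.free R)) ⋙
    AlgebraicTopology.alternatingFaceMapComplex _

/-- The `n`-th singular homology of a topological space, with coefficients in `R`. -/
noncomputable def SingularHomology (R : Type) [CommRing R] (n : ℕ) (X : Type)
    [TopologicalSpace X] : ModuleCat.{0} R :=
  (singularChainComplexFunctor R ⋙ HomologicalComplex.homologyFunctor _ _ n).obj (TopCat.of X)

/-- The setoid on the ordered configuration space (the space of injective tuples
`Fin k → M`) identifying tuples that differ by a permutation of the coordinates. -/
def configSetoid (M : Type) (k : ℕ) : Setoid {f : Fin k → M // Function.Injective f} where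
  r f g := ∃ σ : Equiv.Perm (Fin k), (f : Fin k → M) ∘ σ = g
  iseqv := by
    constructor
    · exact fun f => ⟨Equiv.refl _, rfl⟩
    · rintro f g ⟨σ, h⟩
      exact ⟨σ.symm, by rw [← h]; ext x; simp⟩
    · rintro f g h ⟨σ, hσ⟩ ⟨τ, hτ⟩
      exact ⟨τ.trans σ, by rw [← hτ, ← hσ]; rfl⟩

/-- The unordered configuration space `C_k(M)` of `k` points in `M`: the quotient of
the space of injective tuples `Fin k → M` (with the subspace topology from the product
topology) by the permutation action of the symmetric group, with the quotient topology. -/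
def UnordConfigSpace (M : Type) (k : ℕ) : Type := Quotient (configSetoid M k)

instance (M : Type) [TopologicalSpace M] (k : ℕ) : TopologicalSpace (UnordConfigSpace M k) :=
  instTopologicalSpaceQuotient

namespace SH
open Finset

noncomputable section

/-! ### Affine (tuple) chains -/

/-- Formal chains of `n`-tuples. -/
abbrev LC (n : ℕ) (K : Type) := (Fin n → K) →₀ ℚ

def ld (n : ℕ) (K : Type) : LC (n+1) K →ₗ[ℚ] LC n K :=
  ∑ i : Fin (n+1), ((-1 : ℚ)^(i : ℕ)) • Finsupp.lmapDomain ℚ ℚ (fun v : Fin (n+1) → K => v ∘ i.succAbove)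

lemma ld_single (n : ℕ) (K : Type) (v : Fin (n+1) → K) :
    ld n K (Finsupp.single v 1) =
      ∑ i : Fin (n+1), ((-1 : ℚ)^(i : ℕ)) • Finsupp.single (v ∘ i.succAbove) 1 := by
  simp [ld, LinearMap.sum_apply, Finsupp.mapDomain_single]

def cone {n : ℕ} {K : Type} (b : K) : LC n K →ₗ[ℚ] LC (n+1) K :=
  Finsupp.lmapDomain ℚ ℚ (fun v : Fin n → K => (Fin.cons b v : Fin (n+1) → K))

lemma cone_single {n : ℕ} {K : Type} (b : K) (v : Fin n → K) (q : ℚ) :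
    cone b (Finsupp.single v q) = Finsupp.single (Fin.cons b v : Fin (n+1) → K) q := by
  simp [cone, Finsupp.mapDomain_single]

lemma cons_comp_succ {n : ℕ} {K : Type} (b : K) (v : Fin (n+1) → K) (i : Fin (n+1)) :
    (Fin.cons b v : Fin (n+2) → K) ∘ (i.succ).succAbove = Fin.cons b (v ∘ i.succAbove) := by
  funext j
  refine Fin.cases ?_ (fun j => ?_) j <;> simp

lemma lc_ext {n : ℕ} {K : Type} {M : Type} [AddCommGroup M] [Module ℚ M] {f g : LC n K →ₗ[ℚ] M}
    (h : ∀ v, f (Finsupp.single v 1) = g (Finsupp.single v 1)) : f = g := by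
  apply Finsupp.lhom_ext'
  intro v
  apply LinearMap.ext_ring
  exact h v

lemma ld_cone_zero {K : Type} (b : K) (c : LC 0 K) : ld 0 K (cone b c) = c := by
  suffices h : (ld 0 K) ∘ₗ (cone b) = LinearMap.id from DFunLike.congr_fun h c
  apply lc_ext
  intro v
  simp only [LinearMap.comp_apply, cone_single, ld_single, LinearMap.id_apply]
  simp

lemma ld_cone {n : ℕ} {K : Type} (b : K) (c : LC (n+1) K) :
    ld (n+1) K (cone b c) = c - cone b (ld n K c) := by
  suffices h : (ld (n+1) K) ∘ₗ (cone b) = LinearMap.id - cone b ∘ₗ ld n K from DFunLike.congr_fun h c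
  apply lc_ext
  intro v
  simp only [LinearMap.comp_apply, cone_single, ld_single, LinearMap.id_apply, LinearMap.sub_apply,
    map_sum, map_smul]
  rw [Fin.sum_univ_succ]
  simp only [cons_comp_succ, Fin.val_succ, pow_succ, Fin.val_zero, pow_zero]
  have : (Fin.cons b v : Fin (n+2) → K) ∘ (0 : Fin (n+2)).succAbove = v := by
    funext j; simp
  rw [this]
  simp [Finset.sum_neg_distrib, sub_eq_add_neg]

lemma ld_ld {n : ℕ} {K : Type} (c : LC (n+2) K) : ld n K (ld (n+1) K c) = 0 := by
  induction n with
  | zero =>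
    suffices h : (ld 0 K) ∘ₗ (ld 1 K) = 0 from DFunLike.congr_fun h c
    apply lc_ext
    intro v
    have : Finsupp.single v (1:ℚ) = cone (v 0) (Finsupp.single (Fin.tail v) 1) := by
      rw [cone_single, Fin.cons_self_tail]
    rw [this, LinearMap.comp_apply, ld_cone, map_sub, ld_cone_zero, sub_self]; rfl
  | succ n ih =>
    suffices h : (ld (n+1) K) ∘ₗ (ld (n+2) K) = 0 from DFunLike.congr_fun h c
    apply lc_ext
    intro v
    have : Finsupp.single v (1:ℚ) = cone (v 0) (Finsupp.single (Fin.tail v) 1) := by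
      rw [cone_single, Fin.cons_self_tail]
    rw [this, LinearMap.comp_apply, ld_cone, map_sub, ld_cone, ih, map_zero, sub_zero, sub_self]; rfl

def lpush {n : ℕ} {K L : Type} (φ : K → L) : LC n K →ₗ[ℚ] LC n L :=
  Finsupp.lmapDomain ℚ ℚ (fun v => φ ∘ v)

lemma lpush_single {n : ℕ} {K L : Type} (φ : K → L) (v : Fin n → K) (q : ℚ) :
    lpush φ (Finsupp.single v q) = Finsupp.single (φ ∘ v) q := by
  simp [lpush, Finsupp.mapDomain_single]

lemma lpush_cone {n : ℕ} {K L : Type} (φ : K → L) (b : K) (c : LC n K) :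
    lpush φ (cone b c) = cone (φ b) (lpush φ c) := by
  suffices h : lpush φ ∘ₗ (cone (n := n) b) = cone (φ b) ∘ₗ lpush φ from DFunLike.congr_fun h c
  apply lc_ext
  intro v
  simp only [LinearMap.comp_apply, cone_single, lpush_single]
  congr 1
  funext j
  refine Fin.cases ?_ (fun j => ?_) j <;> simp

lemma lpush_ld {n : ℕ} {K L : Type} (φ : K → L) (c : LC (n+1) K) :
    lpush φ (ld n K c) = ld n L (lpush φ c) := by
  suffices h : lpush φ ∘ₗ ld n K = ld n L ∘ₗ lpush φ from DFunLike.congr_fun h c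
  apply lc_ext
  intro v
  simp only [LinearMap.comp_apply, ld_single, lpush_single, map_sum, map_smul]
  rfl

/-! ### Convex spaces -/

abbrev Spx (n : ℕ) := stdSimplex ℝ (Fin n)

class Cvx (K : Type) [TopologicalSpace K] where
  comb : ∀ {n : ℕ}, Spx n → (Fin n → K) → K
  cont : ∀ {n : ℕ} (v : Fin n → K), Continuous (fun t : Spx n => comb t v)
  comb_map : ∀ {n m : ℕ} (f : Fin n → Fin m) (t : Spx n) (v : Fin m → K),
    comb (stdSimplex.map f t) v = comb t (v ∘ f)

open Cvx

/-- the point `∑ t i • v i` of a simplex -/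
def scomb {m n : ℕ} (t : Spx n) (v : Fin n → Spx m) : Spx m :=
  ⟨∑ i, t i • (v i : Fin m → ℝ), (convex_stdSimplex ℝ (Fin m)).sum_mem
    (fun i _ => t.2.1 i) t.2.2 (fun i _ => (v i).2)⟩

lemma scomb_apply {m n : ℕ} (t : Spx n) (v : Fin n → Spx m) (j : Fin m) :
    (scomb t v : Spx m) j = ∑ i, t i * v i j := by
  show (∑ i, t i • (v i : Fin m → ℝ)) j = _
  simp [Finset.sum_apply]

lemma spx_ext {m : ℕ} {s t : Spx m} (h : ∀ j, s j = t j) : s = t :=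
  stdSimplex.ext (funext h)

lemma map_apply' {n m : ℕ} (f : Fin n → Fin m) (t : Spx n) (j : Fin m) :
    (stdSimplex.map f t) j = ∑ i with f i = j, t i := by
  show (stdSimplex.map f t : Fin m → ℝ) j = _
  rw [stdSimplex.map_coe]
  simp [FunOnFinite.linearMap_apply_apply]

instance (m : ℕ) : Cvx (Spx m) where
  comb := scomb
  cont v := by
    apply Continuous.subtype_mk
    apply continuous_finsetSum
    intro i _
    exact ((continuous_apply i).comp continuous_subtype_val).smul continuous_const
  comb_map f t v := by
    apply spx_ext
    intro j
    simp only [scomb_apply, map_apply', Finset.sum_mul, Function.comp]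
    rw [← Finset.sum_fiberwise (s := Finset.univ) (g := f)]
    refine Finset.sum_congr rfl fun i _ => Finset.sum_congr rfl fun k hk => ?_
    rw [(Finset.mem_filter.1 hk).2]

instance (K L : Type) [TopologicalSpace K] [TopologicalSpace L] [Cvx K] [Cvx L] : Cvx (K × L) where
  comb t v := (comb t (Prod.fst ∘ v), comb t (Prod.snd ∘ v))
  cont v := (Cvx.cont _).prodMk (Cvx.cont _)
  comb_map f t v := by simp only [Cvx.comb_map]; rfl

def Aff {K L : Type} [TopologicalSpace K] [TopologicalSpace L] [Cvx K] [Cvx L] (φ : K → L) : Prop :=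
  ∀ (n : ℕ) (t : Spx n) (v : Fin n → K), φ (comb t v) = comb t (φ ∘ v)

lemma comb_comb {m n k : ℕ} (t : Spx k) (s : Fin k → Spx n) (v : Fin n → Spx m) :
    comb (comb t s) v = comb t (fun i => comb (s i) v) := by
  apply spx_ext
  intro j
  show scomb (scomb t s) v j = scomb t (fun i => scomb (s i) v) j
  simp only [scomb_apply, Finset.sum_mul, Finset.mul_sum, mul_assoc]
  exact Finset.sum_comm

lemma comb_vertex {n : ℕ} (t : Spx n) : comb t (stdSimplex.vertex : Fin n → Spx n) = t := by
  apply spx_ext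
  intro j
  show scomb _ _ j = _
  rw [scomb_apply]
  rw [Finset.sum_eq_single j]
  · have : (stdSimplex.vertex j : Spx n) j = (1:ℝ) := by
      show (stdSimplex.vertex j : Fin n → ℝ) j = _
      simp
    rw [this, mul_one]
  · intro b _ hb
    have : (stdSimplex.vertex b : Spx n) j = (0:ℝ) := by
      show (stdSimplex.vertex b : Fin n → ℝ) j = _
      simp [hb.symm]
    rw [this, mul_zero]
  · simp

def bary (n : ℕ) : Spx (n+1) := stdSimplex.barycenter

def bar {n : ℕ} {K : Type} [TopologicalSpace K] [Cvx K] (v : Fin (n+1) → K) : K := comb (bary n) v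

variable {K L : Type} [TopologicalSpace K] [TopologicalSpace L] [Cvx K] [Cvx L]

lemma Aff.bar {φ : K → L} (h : Aff φ) {n : ℕ} (v : Fin (n+1) → K) : φ (bar v) = SH.bar (φ ∘ v) :=
  h _ _ _

/-! ### Subdivision on affine chains -/

def Sd (K : Type) [TopologicalSpace K] [Cvx K] : (n : ℕ) → LC n K →ₗ[ℚ] LC n K
  | 0 => LinearMap.id
  | n+1 => Finsupp.linearCombination ℚ
      (fun v : Fin (n+1) → K => cone (bar v) (Sd K n (ld n K (Finsupp.single v 1))))

lemma Sd_single {n : ℕ} (v : Fin (n+1) → K) :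
    Sd K (n+1) (Finsupp.single v 1) = cone (bar v) (Sd K n (ld n K (Finsupp.single v 1))) := by
  simp [Sd]

lemma ld_Sd {n : ℕ} (c : LC (n+1) K) : ld n K (Sd K (n+1) c) = Sd K n (ld n K c) := by
  induction n with
  | zero =>
    suffices h : (ld 0 K) ∘ₗ (Sd K 1) = Sd K 0 ∘ₗ ld 0 K from DFunLike.congr_fun h c
    apply lc_ext
    intro v
    simp only [LinearMap.comp_apply, Sd_single, ld_cone_zero]
  | succ n ih =>
    suffices h : (ld (n+1) K) ∘ₗ (Sd K (n+2)) = Sd K (n+1) ∘ₗ ld (n+1) K from DFunLike.congr_fun h c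
    apply lc_ext
    intro v
    simp only [LinearMap.comp_apply, Sd_single, ld_cone, ih, ld_ld, map_zero, sub_zero]

lemma lpush_Sd {φ : K → L} (h : Aff φ) {n : ℕ} (c : LC n K) :
    lpush φ (Sd K n c) = Sd L n (lpush φ c) := by
  induction n with
  | zero => rfl
  | succ n ih =>
    suffices h : lpush φ ∘ₗ (Sd K (n+1)) = Sd L (n+1) ∘ₗ lpush φ from DFunLike.congr_fun h c
    apply lc_ext
    intro v
    simp only [LinearMap.comp_apply, Sd_single, lpush_cone, ih, lpush_ld, h.bar, lpush_single]

def Th (K : Type) [TopologicalSpace K] [Cvx K] : (n : ℕ) → LC n K →ₗ[ℚ] LC (n+1) K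
  | 0 => 0
  | n+1 => Finsupp.linearCombination ℚ
      (fun v : Fin (n+1) → K => cone (bar v)
        (Finsupp.single v 1 - Th K n (ld n K (Finsupp.single v 1))))

lemma Th_single {n : ℕ} (v : Fin (n+1) → K) :
    Th K (n+1) (Finsupp.single v 1) = cone (bar v)
        (Finsupp.single v 1 - Th K n (ld n K (Finsupp.single v 1))) := by
  simp [Th]

lemma ld_Th {n : ℕ} (c : LC (n+1) K) :
    ld (n+1) K (Th K (n+1) c) = c - Sd K (n+1) c - Th K n (ld n K c) := by
  induction n with
  | zero =>
    suffices h : (ld 1 K) ∘ₗ (Th K 1) = LinearMap.id - Sd K 1 - Th K 0 ∘ₗ ld 0 K from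
      DFunLike.congr_fun h c
    apply lc_ext
    intro v
    simp [LinearMap.comp_apply, ld_cone, Th, Sd]
  | succ n ih =>
    suffices h : (ld (n+2) K) ∘ₗ (Th K (n+2)) = LinearMap.id - Sd K (n+2) - Th K (n+1) ∘ₗ ld (n+1) K
      from DFunLike.congr_fun h c
    apply lc_ext
    intro v
    simp only [LinearMap.comp_apply, Th_single, ld_cone, Sd_single, map_sub, ih, ld_ld,
      LinearMap.sub_apply, LinearMap.id_apply, map_zero]
    abel

lemma lpush_Th {φ : K → L} (h : Aff φ) {n : ℕ} (c : LC n K) :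
    lpush φ (Th K n c) = Th L n (lpush φ c) := by
  induction n with
  | zero => simp [Th]
  | succ n ih =>
    suffices h : lpush φ ∘ₗ (Th K (n+1)) = Th L (n+1) ∘ₗ lpush φ from DFunLike.congr_fun h c
    apply lc_ext
    intro v
    simp only [LinearMap.comp_apply, Th_single, lpush_cone, map_sub, ih, lpush_ld, h.bar, lpush_single]

/-! ### Prism operator on affine chains -/

abbrev i0 (x : K) : K × Spx 2 := (x, stdSimplex.vertex 0)
abbrev i1 (x : K) : K × Spx 2 := (x, stdSimplex.vertex 1)

def Pr (K : Type) [TopologicalSpace K] [Cvx K] : (n : ℕ) → LC n K →ₗ[ℚ] LC (n+1) (K × Spx 2)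
  | 0 => 0
  | n+1 => Finsupp.linearCombination ℚ
      (fun v : Fin (n+1) → K => cone (i0 (bar v))
        (Finsupp.single (i1 ∘ v) 1 - Finsupp.single (i0 ∘ v) 1 - Pr K n (ld n K (Finsupp.single v 1))))

lemma Pr_single {n : ℕ} (v : Fin (n+1) → K) :
    Pr K (n+1) (Finsupp.single v 1) = cone (i0 (bar v))
        (lpush i1 (Finsupp.single v 1) - lpush i0 (Finsupp.single v 1)
          - Pr K n (ld n K (Finsupp.single v 1))) := by
  simp [Pr, lpush_single]

lemma ld_Pr {n : ℕ} (c : LC (n+1) K) :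
    ld (n+1) _ (Pr K (n+1) c) = lpush i1 c - lpush i0 c - Pr K n (ld n K c) := by
  induction n with
  | zero =>
    suffices h : (ld 1 _) ∘ₗ (Pr K 1) = lpush i1 - lpush i0 - Pr K 0 ∘ₗ ld 0 K from
      DFunLike.congr_fun h c
    apply lc_ext
    intro v
    have : (lpush i1 : LC 0 K →ₗ[ℚ] LC 0 (K × Spx 2)) = lpush i0 := by
      apply lc_ext
      intro v
      rw [lpush_single, lpush_single]
      congr 1
      exact Subsingleton.elim _ _
    simp only [LinearMap.comp_apply, Pr_single, ld_cone, map_sub, ← lpush_ld, this]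
    simp [Pr]
  | succ n ih =>
    suffices h : (ld (n+2) _) ∘ₗ (Pr K (n+2)) = lpush i1 - lpush i0 - Pr K (n+1) ∘ₗ ld (n+1) K
      from DFunLike.congr_fun h c
    apply lc_ext
    intro v
    simp only [LinearMap.comp_apply, Pr_single, ld_cone, map_sub, ih, ld_ld,
      LinearMap.sub_apply, map_zero, ← lpush_ld]
    abel

lemma lpush_Pr {φ : K → L} (h : Aff φ) {n : ℕ} (c : LC n K) :
    lpush (Prod.map φ id) (Pr K n c) = Pr L n (lpush φ c) := by
  induction n with
  | zero => simp [Pr]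
  | succ n ih =>
    suffices h : lpush (Prod.map φ id) ∘ₗ (Pr K (n+1)) = Pr L (n+1) ∘ₗ lpush φ from DFunLike.congr_fun h c
    apply lc_ext
    intro v
    simp only [LinearMap.comp_apply, Pr_single, lpush_cone, map_sub, ih, lpush_ld, lpush_single,
      Prod.map, h.bar]
    rfl

end
end SH

namespace SH
open Finset Cvx

noncomputable section

/-! ### Singular chains (augmented, degree shifted by one) -/

abbrev Sing (n : ℕ) (X : Type) [TopologicalSpace X] := C(Spx n, X)
abbrev Ch (n : ℕ) (X : Type) [TopologicalSpace X] := Sing n X →₀ ℚ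

def face {n : ℕ} (i : Fin (n+1)) : C(Spx n, Spx (n+1)) :=
  ⟨stdSimplex.map i.succAbove, stdSimplex.continuous_map _⟩

def bd (n : ℕ) (X : Type) [TopologicalSpace X] : Ch (n+1) X →ₗ[ℚ] Ch n X :=
  ∑ i : Fin (n+1), ((-1 : ℚ)^(i : ℕ)) •
    Finsupp.lmapDomain ℚ ℚ (fun σ : Sing (n+1) X => σ.comp (face i))

variable {X Y Z : Type} [TopologicalSpace X] [TopologicalSpace Y] [TopologicalSpace Z]
variable {K L : Type} [TopologicalSpace K] [TopologicalSpace L] [Cvx K] [Cvx L]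

lemma bd_single (n : ℕ) (σ : Sing (n+1) X) :
    bd n X (Finsupp.single σ 1) =
      ∑ i : Fin (n+1), ((-1 : ℚ)^(i : ℕ)) • Finsupp.single (σ.comp (face i)) 1 := by
  simp [bd, LinearMap.sum_apply, Finsupp.mapDomain_single]

lemma ch_ext {n : ℕ} {M : Type} [AddCommGroup M] [Module ℚ M] {f g : Ch n X →ₗ[ℚ] M}
    (h : ∀ v, f (Finsupp.single v 1) = g (Finsupp.single v 1)) : f = g := by
  apply Finsupp.lhom_ext'
  intro v
  apply LinearMap.ext_ring
  exact h v

def push {n : ℕ} (f : C(X, Y)) : Ch n X →ₗ[ℚ] Ch n Y :=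
  Finsupp.lmapDomain ℚ ℚ (fun σ => f.comp σ)

lemma push_single {n : ℕ} (f : C(X, Y)) (σ : Sing n X) (q : ℚ) :
    push f (Finsupp.single σ q) = Finsupp.single (f.comp σ) q := by
  simp [push, Finsupp.mapDomain_single]

lemma push_push {n : ℕ} (g : C(Y, Z)) (f : C(X, Y)) (c : Ch n X) :
    push g (push f c) = push (g.comp f) c := by
  suffices h : push g ∘ₗ push (n := n) f = push (g.comp f) from DFunLike.congr_fun h c
  apply ch_ext
  intro σ
  simp only [LinearMap.comp_apply, push_single]
  rfl

lemma push_id {n : ℕ} (c : Ch n X) : push (ContinuousMap.id X) c = c := by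
  suffices h : push (n := n) (ContinuousMap.id X) = LinearMap.id from DFunLike.congr_fun h c
  apply ch_ext
  intro σ
  simp only [LinearMap.id_apply, push_single]
  rfl

lemma push_bd {n : ℕ} (f : C(X, Y)) (c : Ch (n+1) X) : push f (bd n X c) = bd n Y (push f c) := by
  suffices h : push f ∘ₗ bd n X = bd n Y ∘ₗ push f from DFunLike.congr_fun h c
  apply ch_ext
  intro σ
  simp only [LinearMap.comp_apply, push_single, bd_single, map_sum, map_smul]
  rfl

/-- affine singular simplex -/
def real {n : ℕ} (v : Fin n → K) : Sing n K := ⟨fun t => comb t v, cont v⟩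

def realL {n : ℕ} : LC n K →ₗ[ℚ] Ch n K := Finsupp.lmapDomain ℚ ℚ real

lemma realL_single {n : ℕ} (v : Fin n → K) (q : ℚ) :
    realL (Finsupp.single v q) = Finsupp.single (real v) q := by
  simp [realL, Finsupp.mapDomain_single]

lemma real_comp_face {n : ℕ} (v : Fin (n+1) → K) (i : Fin (n+1)) :
    (real v).comp (face i) = real (v ∘ i.succAbove) := by
  ext t
  exact comb_map _ _ _

lemma realL_ld {n : ℕ} (c : LC (n+1) K) : realL (ld n K c) = bd n K (realL c) := by
  suffices h : realL ∘ₗ ld n K = bd n K ∘ₗ realL from DFunLike.congr_fun h c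
  apply lc_ext
  intro v
  simp only [LinearMap.comp_apply, realL_single, bd_single, ld_single, map_sum, map_smul,
    real_comp_face]

lemma push_realL {n : ℕ} (φ : C(K, L)) (h : Aff φ) (c : LC n K) :
    push φ (realL c) = realL (lpush φ c) := by
  suffices h : push φ ∘ₗ realL (n := n) = realL ∘ₗ lpush φ from DFunLike.congr_fun h c
  apply lc_ext
  intro v
  simp only [LinearMap.comp_apply, realL_single, push_single, lpush_single]
  congr 1
  ext t
  exact h _ _ _

lemma aff_real {n m : ℕ} (v : Fin n → Spx m) : Aff (real v) := by
  intro k t s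
  exact comb_comb _ _ _

abbrev ev (n : ℕ) : Fin n → Spx n := stdSimplex.vertex
abbrev es (n : ℕ) : LC n (Spx n) := Finsupp.single (ev n) 1

lemma real_ev (n : ℕ) : real (ev n) = ContinuousMap.id (Spx n) := by
  ext1 t
  exact comb_vertex t

lemma face_eq_real {n : ℕ} (i : Fin (n+1)) : face i = real (ev (n+1) ∘ i.succAbove) := by
  rw [← real_comp_face, real_ev]; rfl

lemma aff_face {n : ℕ} (i : Fin (n+1)) : Aff (face i) := by
  rw [face_eq_real]; exact aff_real _

lemma face_comp_ev {n : ℕ} (i : Fin (n+1)) : face i ∘ ev n = ev (n+1) ∘ i.succAbove := by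
  funext j
  exact stdSimplex.map_vertex _ _

lemma ld_es (n : ℕ) : ld n _ (es (n+1)) =
    ∑ i : Fin (n+1), ((-1 : ℚ)^(i : ℕ)) • lpush (face i) (es n) := by
  simp only [ld_single, lpush_single, face_comp_ev]

lemma single_eq_push {n : ℕ} (σ : Sing n X) : Finsupp.single σ 1 = push σ (realL (es n)) := by
  rw [realL_single, push_single, real_ev]; rfl

lemma bd_bd {n : ℕ} (c : Ch (n+2) X) : bd n X (bd (n+1) X c) = 0 := by
  suffices h : bd n X ∘ₗ bd (n+1) X = 0 from DFunLike.congr_fun h c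
  apply ch_ext
  intro σ
  rw [LinearMap.comp_apply, single_eq_push, ← push_bd, ← push_bd, ← realL_ld, ← realL_ld, ld_ld]
  simp

/-- operator on singular chains induced by a family of universal chains -/
def op {p q : ℕ} (u : LC q (Spx p)) (X : Type) [TopologicalSpace X] : Ch p X →ₗ[ℚ] Ch q X :=
  Finsupp.linearCombination ℚ (fun σ : Sing p X => push σ (realL u))

lemma op_single {p q : ℕ} (u : LC q (Spx p)) (σ : Sing p X) :
    op u X (Finsupp.single σ 1) = push σ (realL u) := by simp [op]

lemma push_op {p q : ℕ} (u : LC q (Spx p)) (f : C(X, Y)) (c : Ch p X) :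
    push f (op u X c) = op u Y (push f c) := by
  suffices h : push f ∘ₗ op u X = op u Y ∘ₗ push f from DFunLike.congr_fun h c
  apply ch_ext
  intro σ
  simp only [LinearMap.comp_apply, op_single, push_single, push_push]

def SdS (n : ℕ) (X : Type) [TopologicalSpace X] : Ch n X →ₗ[ℚ] Ch n X := op (Sd _ n (es n)) X
def ThS (n : ℕ) (X : Type) [TopologicalSpace X] : Ch n X →ₗ[ℚ] Ch (n+1) X := op (Th _ n (es n)) X

lemma op_bd {p q : ℕ} (G : ∀ m, LC p (Spx m) →ₗ[ℚ] LC q (Spx m))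
    (hG : ∀ (i : Fin (p+1)) c, lpush (face i) (G p c) = G (p+1) (lpush (face i) c)) (σ : Sing (p+1) X) :
    op (G p (es p)) X (bd p X (Finsupp.single σ 1)) = push σ (realL (G (p+1) (ld p _ (es (p+1))))) := by
  rw [bd_single, ld_es]
  simp only [map_sum, map_smul, op_single, ← hG]
  refine Finset.sum_congr rfl fun i _ => ?_
  rw [← push_realL _ (aff_face i), push_push]

lemma bd_SdS {n : ℕ} (c : Ch (n+1) X) : bd n X (SdS (n+1) X c) = SdS n X (bd n X c) := by
  suffices h : bd n X ∘ₗ SdS (n+1) X = SdS n X ∘ₗ bd n X from DFunLike.congr_fun h c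
  apply ch_ext
  intro σ
  simp only [LinearMap.comp_apply, SdS]
  rw [op_bd (fun m => Sd (Spx m) n) (fun i c => lpush_Sd (aff_face i) c), op_single, ← push_bd,
    ← realL_ld, ld_Sd]

lemma bd_ThS {n : ℕ} (c : Ch (n+1) X) :
    bd (n+1) X (ThS (n+1) X c) = c - SdS (n+1) X c - ThS n X (bd n X c) := by
  suffices h : bd (n+1) X ∘ₗ ThS (n+1) X = LinearMap.id - SdS (n+1) X - ThS n X ∘ₗ bd n X
    from DFunLike.congr_fun h c
  apply ch_ext
  intro σ
  simp only [LinearMap.comp_apply, SdS, ThS, LinearMap.sub_apply, LinearMap.id_apply]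
  rw [op_bd (fun m => Th (Spx m) n) (fun i c => lpush_Th (aff_face i) c), op_single, op_single,
    ← push_bd, ← realL_ld, ld_Th, map_sub, map_sub, map_sub, map_sub, ← single_eq_push]

lemma SdS_zero (c : Ch 0 X) : SdS 0 X c = c := by
  suffices h : SdS 0 X = LinearMap.id from DFunLike.congr_fun h c
  apply ch_ext
  intro σ
  simp only [SdS, op_single, LinearMap.id_apply, Sd, ← single_eq_push]

lemma SdS_realL {n m : ℕ} (c : LC n (Spx m)) : SdS n _ (realL c) = realL (Sd _ n c) := by
  suffices h : SdS n _ ∘ₗ realL = realL ∘ₗ Sd (Spx m) n from DFunLike.congr_fun h c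
  apply lc_ext
  intro v
  simp only [LinearMap.comp_apply, realL_single, SdS, op_single]
  rw [push_realL _ (aff_real v), lpush_Sd (aff_real v), lpush_single]
  congr 3
  funext i
  show comb (ev n i) v = v i
  apply spx_ext
  intro j
  show scomb _ _ j = _
  rw [scomb_apply, Finset.sum_eq_single i]
  · have : (stdSimplex.vertex i : Spx n) i = (1:ℝ) := by
      show (stdSimplex.vertex i : Fin n → ℝ) i = _
      simp
    rw [this, one_mul]
  · intro b _ hb
    have : (stdSimplex.vertex i : Spx n) b = (0:ℝ) := by
      show (stdSimplex.vertex i : Fin n → ℝ) b = _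
      simp [hb]
    rw [this, zero_mul]
  · simp

lemma push_SdS {n : ℕ} (f : C(X, Y)) (c : Ch n X) : push f (SdS n X c) = SdS n Y (push f c) :=
  push_op _ _ _

/-- prism operator -/
def PrS (n : ℕ) (H : C(X × Spx 2, Y)) : Ch n X →ₗ[ℚ] Ch (n+1) Y :=
  Finsupp.linearCombination ℚ (fun σ : Sing n X =>
    push (H.comp (σ.prodMap (ContinuousMap.id _))) (realL (Pr _ n (es n))))

lemma PrS_single {n : ℕ} (H : C(X × Spx 2, Y)) (σ : Sing n X) : PrS n H (Finsupp.single σ 1) =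
    push (H.comp (σ.prodMap (ContinuousMap.id _))) (realL (Pr _ n (es n))) := by simp [PrS]

def end0 (H : C(X × Spx 2, Y)) : C(X, Y) := ⟨fun x => H (x, stdSimplex.vertex 0), by fun_prop⟩
def end1 (H : C(X × Spx 2, Y)) : C(X, Y) := ⟨fun x => H (x, stdSimplex.vertex 1), by fun_prop⟩

lemma comb_const {n m : ℕ} (t : Spx n) (x : Spx m) : comb t (fun _ => x) = x := by
  apply spx_ext
  intro j
  show scomb _ _ j = _
  rw [scomb_apply, ← Finset.sum_mul, stdSimplex.sum_eq_one, one_mul]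

lemma aff_prod {φ : K → L} (h : Aff φ) : Aff (Prod.map φ (id : Spx 2 → Spx 2)) := by
  intro n t v
  exact Prod.ext (h n t _) rfl

lemma bd_PrS {n : ℕ} (H : C(X × Spx 2, Y)) (c : Ch (n+1) X) :
    bd (n+1) Y (PrS (n+1) H c) = push (end1 H) c - push (end0 H) c - PrS n H (bd n X c) := by
  suffices h : bd (n+1) Y ∘ₗ PrS (n+1) H = push (end1 H) - push (end0 H) - PrS n H ∘ₗ bd n X
    from DFunLike.congr_fun h c
  apply ch_ext
  intro σ
  simp only [LinearMap.comp_apply, LinearMap.sub_apply]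
  rw [PrS_single, ← push_bd, ← realL_ld, ld_Pr, map_sub, map_sub, map_sub, map_sub]
  have key : ∀ k : Fin 2, (push (H.comp (σ.prodMap (ContinuousMap.id _)))
      (realL (lpush (fun x => (x, stdSimplex.vertex k)) (es (n+1)))) : Ch (n+1) Y) =
      Finsupp.single (H.comp ⟨fun t => (σ t, stdSimplex.vertex k), by fun_prop⟩) 1 := by
    intro k
    rw [lpush_single, realL_single, push_single]
    congr 1
    ext t
    simp only [ContinuousMap.comp_apply]
    congr 1
    refine Prod.ext ?_ ?_
    · exact congrArg σ (comb_vertex t)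
    · exact comb_const t _
  congr 1
  · congr 1
    · rw [key 1, push_single]; rfl
    · rw [key 0, push_single]; rfl
  · rw [bd_single, ld_es]
    simp only [map_sum, map_smul, PrS_single, ← lpush_Pr (aff_face _)]
    refine Finset.sum_congr rfl fun i _ => ?_
    congr 1
    have := push_realL ((face i).prodMap (ContinuousMap.id (Spx 2))) (aff_prod (aff_face i))
      (Pr _ n (es n))
    erw [← this]
    rw [push_push]
    rfl

/-! ### Cycles and supports -/

def cyc (X : Type) [TopologicalSpace X] : (n : ℕ) → Submodule ℚ (Ch n X)
  | 0 => ⊤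
  | n+1 => LinearMap.ker (bd n X)

def CA (n : ℕ) (A : Set X) : Submodule ℚ (Ch n X) :=
  Finsupp.supported ℚ ℚ {σ : Sing n X | ∀ t, σ t ∈ A}

lemma bd_mem_cyc {n : ℕ} (c : Ch (n+1) X) : bd n X c ∈ cyc X n := by
  cases n with
  | zero => trivial
  | succ n => exact bd_bd c

lemma push_mem_cyc {n : ℕ} (f : C(X, Y)) {c : Ch n X} (h : c ∈ cyc X n) : push f c ∈ cyc Y n := by
  cases n with
  | zero => trivial
  | succ n =>
    have h' : bd n X c = 0 := h
    show bd n Y _ = 0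
    rw [← push_bd, h', map_zero]

lemma SdS_mem_cyc {n : ℕ} {c : Ch n X} (h : c ∈ cyc X n) : SdS n X c ∈ cyc X n := by
  cases n with
  | zero => trivial
  | succ n =>
    have h' : bd n X c = 0 := h
    show bd n X _ = 0
    rw [bd_SdS, h', map_zero]

lemma mem_of_single {n : ℕ} {A : Set X} {M : Type} [AddCommGroup M] [Module ℚ M] (f : Ch n X →ₗ[ℚ] M)
    (S : Submodule ℚ M) (h : ∀ σ : Sing n X, (∀ t, σ t ∈ A) → f (Finsupp.single σ 1) ∈ S) {c : Ch n X}
    (hc : c ∈ CA n A) : f c ∈ S := by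
  have : CA n A ≤ S.comap f := by
    rw [CA, Finsupp.supported_eq_span_single, Submodule.span_le]
    rintro _ ⟨σ, hσ, rfl⟩
    exact h σ hσ
  exact this hc

lemma push_mem_CA {n : ℕ} (f : C(X, Y)) {A : Set X} {B : Set Y} (hf : ∀ x ∈ A, f x ∈ B)
    {c : Ch n X} (hc : c ∈ CA n A) : push f c ∈ CA n B := by
  refine mem_of_single _ _ (fun σ hσ => ?_) hc
  rw [push_single]
  exact Finsupp.single_mem_supported _ _ (fun t => hf _ (hσ t))

lemma mem_CA_univ {n : ℕ} (c : Ch n X) : c ∈ CA n (Set.univ : Set X) := by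
  simp [CA]

lemma op_mem_CA {p q : ℕ} (u : LC q (Spx p)) {A : Set X} {c : Ch p X} (hc : c ∈ CA p A) :
    op u X c ∈ CA q A := by
  refine mem_of_single _ _ (fun σ hσ => ?_) hc
  rw [op_single]
  exact push_mem_CA (A := Set.univ) σ (fun x _ => hσ x) (mem_CA_univ _)

lemma SdS_mem_CA {n : ℕ} {A : Set X} {c : Ch n X} (hc : c ∈ CA n A) : SdS n X c ∈ CA n A :=
  op_mem_CA _ hc
lemma ThS_mem_CA {n : ℕ} {A : Set X} {c : Ch n X} (hc : c ∈ CA n A) : ThS n X c ∈ CA (n+1) A :=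
  op_mem_CA _ hc

lemma bd_mem_CA {n : ℕ} {A : Set X} {c : Ch (n+1) X} (hc : c ∈ CA (n+1) A) : bd n X c ∈ CA n A := by
  refine mem_of_single _ _ (fun σ hσ => ?_) hc
  rw [bd_single]
  exact Submodule.sum_mem _ fun i _ => Submodule.smul_mem _ _
    (Finsupp.single_mem_supported _ _ (fun t => hσ _))

/-- `z` bounds in `A` -/
def Bds {n : ℕ} (A : Set X) (z : Ch n X) : Prop := ∃ c ∈ CA (n+1) A, bd n X c = z

lemma Bds.add {n : ℕ} {A : Set X} {z w : Ch n X} (h : Bds A z) (h' : Bds A w) : Bds A (z + w) := by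
  obtain ⟨c, hc, rfl⟩ := h
  obtain ⟨c', hc', rfl⟩ := h'
  exact ⟨c + c', Submodule.add_mem _ hc hc', map_add _ _ _⟩

lemma Bds.smul {n : ℕ} {A : Set X} {z : Ch n X} (q : ℚ) (h : Bds A z) : Bds A (q • z) := by
  obtain ⟨c, hc, rfl⟩ := h
  exact ⟨q • c, Submodule.smul_mem _ _ hc, map_smul _ _ _⟩

lemma Bds.neg {n : ℕ} {A : Set X} {z : Ch n X} (h : Bds A z) : Bds A (-z) := by
  simpa using h.smul (-1)

lemma Bds.sub {n : ℕ} {A : Set X} {z w : Ch n X} (h : Bds A z) (h' : Bds A w) : Bds A (z - w) := by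
  rw [sub_eq_add_neg]; exact h.add h'.neg

lemma CA_mono {n : ℕ} {A B : Set X} (hAB : A ⊆ B) : CA n A ≤ CA n B :=
  Finsupp.supported_mono (fun (σ : Sing n X) (hσ : ∀ t, σ t ∈ A) t => hAB (hσ t))

lemma Bds.mono {n : ℕ} {A B : Set X} (hAB : A ⊆ B) {z : Ch n X} (h : Bds A z) : Bds B z := by
  obtain ⟨c, hc, rfl⟩ := h
  exact ⟨c, CA_mono hAB hc, rfl⟩

lemma Bds.push {n : ℕ} (f : C(X, Y)) {A : Set X} {B : Set Y} (hf : ∀ x ∈ A, f x ∈ B)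
    {z : Ch n X} (h : Bds A z) : Bds B (push f z) := by
  obtain ⟨c, hc, rfl⟩ := h
  exact ⟨SH.push f c, push_mem_CA f hf hc, (push_bd _ _).symm⟩

lemma bds_SdS {n : ℕ} {A : Set X} {z : Ch n X} (hz : z ∈ CA n A) (hc : z ∈ cyc X n) :
    Bds A (z - SdS n X z) := by
  cases n with
  | zero => rw [SdS_zero, sub_self]; exact ⟨0, Submodule.zero_mem _, map_zero _⟩
  | succ n =>
    refine ⟨ThS _ X z, ThS_mem_CA hz, ?_⟩
    have h' : bd n X z = 0 := hc
    rw [bd_ThS, h', map_zero, sub_zero]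

def SdI (n : ℕ) (X : Type) [TopologicalSpace X] : ℕ → Ch n X →ₗ[ℚ] Ch n X
  | 0 => LinearMap.id
  | k+1 => SdS n X ∘ₗ SdI n X k

lemma SdI_mem_CA {n : ℕ} {A : Set X} {c : Ch n X} (hc : c ∈ CA n A) (k : ℕ) : SdI n X k c ∈ CA n A := by
  induction k with
  | zero => exact hc
  | succ k ih => exact SdS_mem_CA ih

lemma SdI_mem_cyc {n : ℕ} {c : Ch n X} (hc : c ∈ cyc X n) (k : ℕ) : SdI n X k c ∈ cyc X n := by
  induction k with
  | zero => exact hc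
  | succ k ih => exact SdS_mem_cyc ih

lemma bd_SdI {n : ℕ} (c : Ch (n+1) X) (k : ℕ) : bd n X (SdI (n+1) X k c) = SdI n X k (bd n X c) := by
  induction k with
  | zero => rfl
  | succ k ih => simp only [SdI, LinearMap.comp_apply, bd_SdS, ih]

lemma push_SdI {n : ℕ} (f : C(X, Y)) (c : Ch n X) (k : ℕ) :
    push f (SdI n X k c) = SdI n Y k (push f c) := by
  induction k with
  | zero => rfl
  | succ k ih => simp only [SdI, LinearMap.comp_apply, push_SdS, ih]

lemma bds_SdI {n : ℕ} {A : Set X} {z : Ch n X} (hz : z ∈ CA n A) (hc : z ∈ cyc X n) (k : ℕ) :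
    Bds A (z - SdI n X k z) := by
  induction k with
  | zero => exact ⟨0, Submodule.zero_mem _, by simp [SdI]⟩
  | succ k ih =>
    have := ih.add (bds_SdS (SdI_mem_CA hz k) (SdI_mem_cyc hc k))
    simpa [SdI] using this

/-- homotopy invariance -/
lemma bds_homotopy {n : ℕ} (H : C(X × Spx 2, Y)) {A : Set X} {B : Set Y}
    (hH : ∀ x ∈ A, ∀ s, H (x, s) ∈ B) {z : Ch n X} (hz : z ∈ CA n A) (hc : z ∈ cyc X n) :
    Bds B (push (end1 H) z - push (end0 H) z) := by
  cases n with
  | zero =>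
    have : (push (end1 H) : Ch 0 X →ₗ[ℚ] _) = push (end0 H) := by
      apply ch_ext
      intro σ
      rw [push_single, push_single]
      congr 1
      ext t
      exact absurd t.2 (by simp [stdSimplex_of_isEmpty_index])
    rw [this, sub_self]; exact ⟨0, Submodule.zero_mem _, map_zero _⟩
  | succ n =>
    refine ⟨PrS _ H z, ?_, ?_⟩
    · refine mem_of_single _ _ (fun σ hσ => ?_) hz
      rw [PrS_single]
      exact push_mem_CA (A := Set.univ) _ (fun x _ => hH _ (hσ x.1) x.2) (mem_CA_univ _)
    · have h' : bd n X z = 0 := hc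
      rw [bd_PrS, h', map_zero, sub_zero]

lemma bds_homotopy' {n : ℕ} (f g : C(X, Y)) (F : ℝ × X → Y) (hF : Continuous F)
    (h0 : ∀ x, F (0, x) = g x) (h1 : ∀ x, F (1, x) = f x) {A : Set X} {B : Set Y}
    (hH : ∀ x ∈ A, ∀ s, 0 ≤ s → s ≤ 1 → F (s, x) ∈ B) {z : Ch n X} (hz : z ∈ CA n A) (hc : z ∈ cyc X n) :
    Bds B (push f z - push g z) := by
  let H : C(X × Spx 2, Y) := ⟨fun p => F (p.2 1, p.1), hF.comp
    (((continuous_apply (1 : Fin 2)).comp (continuous_subtype_val.comp continuous_snd)).prodMk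
      continuous_fst)⟩
  have e1 : end1 H = f := by
    ext x
    refine Eq.trans ?_ (h1 x)
    show F ((stdSimplex.vertex 1 : Fin 2 → ℝ) 1, x) = _
    simp
  have e0 : end0 H = g := by
    ext x
    refine Eq.trans ?_ (h0 x)
    show F ((stdSimplex.vertex 0 : Fin 2 → ℝ) 1, x) = _
    simp
  rw [← e1, ← e0]
  exact bds_homotopy H (fun x hx s => hH x hx _ (stdSimplex.zero_le _ _) (stdSimplex.le_one _ _)) hz hc

/-- acyclicity of contractible pieces -/
lemma bds_contract {n : ℕ} {A : Set X} (x0 : X) (hx0 : x0 ∈ A) (F : ℝ × X → X) (hF : Continuous F)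
    (h0 : ∀ x, F (0, x) = x0) (h1 : ∀ x, F (1, x) = x)
    (hH : ∀ x ∈ A, ∀ s, 0 ≤ s → s ≤ 1 → F (s, x) ∈ A) {z : Ch n X} (hz : z ∈ CA n A) (hc : z ∈ cyc X n) :
    Bds A z := by
  have h := bds_homotopy' (ContinuousMap.id X) (ContinuousMap.const X x0) F hF h0 h1 hH hz hc
  rw [push_id] at h
  suffices h' : Bds A (push (ContinuousMap.const X x0) z) by simpa using h.add h'
  let pt : ∀ m, Ch m X := fun m => Finsupp.single (ContinuousMap.const _ x0) 1
  have hpt : ∀ m, pt m ∈ CA m A := fun m => Finsupp.single_mem_supported _ _ (fun t => hx0)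
  have hbd : ∀ m, bd m X (pt (m+1)) = (∑ i : Fin (m+1), (-1 : ℚ)^(i : ℕ)) • pt m := by
    intro m
    rw [bd_single, Finset.sum_smul]
    rfl
  have hq : ∀ (m) (c : Ch m X), ∃ q : ℚ, push (ContinuousMap.const X x0) c = q • pt m := by
    intro m c
    have : push (ContinuousMap.const X x0) c ∈ Submodule.span ℚ {pt m} := by
      refine mem_of_single (A := Set.univ) _ _ (fun σ _ => ?_) (mem_CA_univ c)
      rw [push_single]
      exact Submodule.mem_span_singleton_self _
    obtain ⟨q, hq⟩ := Submodule.mem_span_singleton.1 this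
    exact ⟨q, hq.symm⟩
  have hs : ∀ m : ℕ, (∑ i : Fin (m+1), (-1 : ℚ)^(i : ℕ)) = if Even m then 1 else 0 := by
    intro m
    rw [Fin.sum_univ_eq_sum_range (fun i => (-1 : ℚ)^i), neg_one_geom_sum]
    by_cases h : Even m <;> simp [Nat.even_add_one, h]
  obtain ⟨q, e⟩ := hq n z
  rw [e]
  by_cases hn : Even n
  · refine ⟨q • pt (n+1), Submodule.smul_mem _ _ (hpt _), ?_⟩
    rw [map_smul, hbd, hs, if_pos hn, one_smul]
  · obtain ⟨m, rfl⟩ : ∃ m, n = m + 1 := Nat.exists_eq_succ_of_ne_zero (by rintro rfl; simp at hn)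
    have : bd m X (q • pt (m+1)) = 0 := by
      rw [← e]; exact push_mem_cyc (ContinuousMap.const X x0) hc
    rw [map_smul, hbd, hs, if_pos (by rwa [Nat.even_add_one, not_not] at hn), one_smul] at this
    have hq0 : q = 0 := by
      have := DFunLike.congr_fun this (ContinuousMap.const _ x0)
      simpa [pt] using this
    rw [hq0, zero_smul]
    exact ⟨0, Submodule.zero_mem _, map_zero _⟩

end
end SH

namespace SH
open Finset Cvx

noncomputable section

variable {X Y Z : Type} [TopologicalSpace X] [TopologicalSpace Y] [TopologicalSpace Z]

/-! ### Mesh estimates -/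

/-- coordinatewise distance at most `D` -/
def near {m : ℕ} (D : ℝ) (x y : Spx m) : Prop := ∀ j, |x j - y j| ≤ D

lemma near.symm {m : ℕ} {D : ℝ} {x y : Spx m} (h : near D x y) : near D y x := fun j => by
  rw [abs_sub_comm]; exact h j

lemma near.mono {m : ℕ} {D D' : ℝ} (hD : D ≤ D') {x y : Spx m} (h : near D x y) : near D' x y :=
  fun j => (h j).trans hD

lemma near_scomb {m n : ℕ} {D : ℝ} (x : Spx m) (v : Fin n → Spx m) (h : ∀ i, near D x (v i))
    (t : Spx n) : near D x (scomb t v) := by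
  intro j
  rw [scomb_apply]
  have e : x j - ∑ i, t i * v i j = ∑ i, t i * (x j - v i j) := by
    simp only [mul_sub, Finset.sum_sub_distrib, ← Finset.sum_mul, stdSimplex.sum_eq_one, one_mul]
  rw [e]
  calc |∑ i, t i * (x j - v i j)| ≤ ∑ i, |t i * (x j - v i j)| := Finset.abs_sum_le_sum_abs _ _
    _ ≤ ∑ i, t i * D := by
        refine Finset.sum_le_sum fun i _ => ?_
        rw [abs_mul, abs_of_nonneg (stdSimplex.zero_le t i)]
        exact mul_le_mul_of_nonneg_left (h i j) (stdSimplex.zero_le t i)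
    _ = D := by rw [← Finset.sum_mul, stdSimplex.sum_eq_one, one_mul]

lemma near_bar {m n : ℕ} {D : ℝ} (v : Fin (n+1) → Spx m) (h : ∀ i k, near D (v i) (v k))
    (i : Fin (n+1)) : near ((n : ℝ) / (n+1) * D) (v i) (bar v) := by
  intro j
  show |v i j - scomb (bary n) v j| ≤ _
  rw [scomb_apply]
  have hb : ∀ k, (bary n) k = (1 : ℝ) / (n+1) := by
    intro k
    have := stdSimplex.barycenter_apply (𝕜 := ℝ) k
    refine Eq.trans this ?_
    simp
  have e : v i j - ∑ k, (bary n) k * v k j = ∑ k, (1 : ℝ) / (n+1) * (v i j - v k j) := by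
    simp only [hb, mul_sub, Finset.sum_sub_distrib, Finset.sum_const, Finset.card_univ,
      Fintype.card_fin, nsmul_eq_mul]
    have : ((n : ℝ) + 1) ≠ 0 := by positivity
    push_cast
    field_simp
  rw [e, ← Finset.mul_sum, abs_mul, abs_of_nonneg (by positivity)]
  have : |∑ k, (v i j - v k j)| ≤ n * D := by
    calc |∑ k, (v i j - v k j)| ≤ ∑ k, |v i j - v k j| := Finset.abs_sum_le_sum_abs _ _
      _ = ∑ k ∈ Finset.univ.erase i, |v i j - v k j| := by
          rw [← Finset.add_sum_erase _ _ (Finset.mem_univ i)]; simp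
      _ ≤ ∑ k ∈ Finset.univ.erase i, D := Finset.sum_le_sum fun k _ => h i k j
      _ = n * D := by simp
  calc 1 / ((n:ℝ)+1) * |∑ k, (v i j - v k j)| ≤ 1 / ((n:ℝ)+1) * (n * D) :=
        mul_le_mul_of_nonneg_left this (by positivity)
    _ = _ := by ring

def inHull {m n k : ℕ} (v : Fin n → Spx m) (D : ℝ) : Set (Fin k → Spx m) :=
  {w | (∀ i, ∃ t : Spx n, w i = comb t v) ∧ ∀ i j, near D (w i) (w j)}

lemma cone_mem_supported {n : ℕ} {K : Type} (b : K) {S : Set (Fin n → K)} {S' : Set (Fin (n+1) → K)}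
    (h : ∀ w ∈ S, (Fin.cons b w : Fin (n+1) → K) ∈ S') {c : LC n K} (hc : c ∈ Finsupp.supported ℚ ℚ S) :
    cone b c ∈ Finsupp.supported ℚ ℚ S' := by
  have : Finsupp.supported ℚ ℚ S ≤ (Finsupp.supported ℚ ℚ S').comap (cone b) := by
    rw [Finsupp.supported_eq_span_single, Submodule.span_le]
    rintro _ ⟨σ, hσ, rfl⟩
    show cone b (Finsupp.single σ 1) ∈ Finsupp.supported ℚ ℚ S'
    rw [cone_single]
    exact Finsupp.single_mem_supported _ _ (h σ hσ)
  exact this hc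

lemma Sd_mem {m n : ℕ} (v : Fin n → Spx m) (D : ℝ) (h : ∀ i k, near D (v i) (v k)) :
    Sd _ n (Finsupp.single v 1) ∈ Finsupp.supported ℚ ℚ (inHull v (((n : ℝ) - 1) / n * D)) := by
  induction n with
  | zero =>
    exact Finsupp.single_mem_supported _ _ ⟨fun i => i.elim0, fun i => i.elim0⟩
  | succ n ih =>
    rcases Nat.eq_zero_or_pos m with rfl | hm
    · exact absurd (v 0).2 (by simp [stdSimplex_of_isEmpty_index])
    have hD : 0 ≤ D := (abs_nonneg _).trans (h 0 0 ⟨0, hm⟩)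
    rw [Sd_single, ld_single, map_sum, map_sum]
    refine Submodule.sum_mem _ fun i _ => ?_
    rw [map_smul, map_smul]
    refine Submodule.smul_mem _ _ ?_
    refine cone_mem_supported _ ?_ (ih (v ∘ i.succAbove) (fun _ _ => h _ _))
    rintro w ⟨hw1, hw2⟩
    have hw1' : ∀ k, ∃ t : Spx (n+1), w k = comb t v := by
      intro k
      obtain ⟨t, ht⟩ := hw1 k
      exact ⟨stdSimplex.map i.succAbove t, by rw [ht, comb_map]⟩
    have hb : ∀ k, near ((((n+1 : ℕ) : ℝ) - 1) / (n+1 : ℕ) * D) (bar v) (w k) := by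
      intro k
      obtain ⟨t, ht⟩ := hw1' k
      rw [ht]
      refine near_scomb _ _ (fun i => ?_) _
      have := (near_bar v h i).symm
      push_cast
      simpa using this
    have hle : ((n : ℝ) - 1) / n * D ≤ (((n+1 : ℕ) : ℝ) - 1) / (n+1 : ℕ) * D := by
      apply mul_le_mul_of_nonneg_right _ hD
      rcases Nat.eq_zero_or_pos n with rfl | hn
      · simp
      · have : (0:ℝ) < n := by exact_mod_cast hn
        push_cast
        rw [div_le_div_iff₀ this (by linarith)]
        nlinarith
    refine ⟨fun k => ?_, fun k l => ?_⟩
    · refine Fin.cases ?_ (fun k => ?_) k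
      · exact ⟨bary n, rfl⟩
      · exact hw1' k
    · refine Fin.cases ?_ (fun k => ?_) k <;> refine Fin.cases ?_ (fun l => ?_) l
      · intro j
        simp only [Fin.cons_zero, sub_self, abs_zero]
        push_cast
        have : (0:ℝ) ≤ n := by positivity
        apply mul_nonneg _ hD
        apply div_nonneg <;> linarith
      · exact hb l
      · exact (hb k).symm
      · exact (hw2 k l).mono hle

def SdLI (n m : ℕ) : ℕ → LC n (Spx m) →ₗ[ℚ] LC n (Spx m)
  | 0 => LinearMap.id
  | k+1 => Sd _ n ∘ₗ SdLI n m k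

lemma SdLI_mem {m n : ℕ} (v : Fin n → Spx m) (D : ℝ) (h : ∀ i k, near D (v i) (v k)) (k : ℕ) :
    SdLI n m k (Finsupp.single v 1) ∈ Finsupp.supported ℚ ℚ
      {w : Fin n → Spx m | ∀ i j, near ((((n : ℝ) - 1) / n)^k * D) (w i) (w j)} := by
  induction k with
  | zero =>
    exact Finsupp.single_mem_supported _ _ (by simpa using h)
  | succ k ih =>
    have : Finsupp.supported ℚ ℚ
        {w : Fin n → Spx m | ∀ i j, near ((((n : ℝ) - 1) / n)^k * D) (w i) (w j)} ≤
        (Finsupp.supported ℚ ℚ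
        {w : Fin n → Spx m | ∀ i j, near ((((n : ℝ) - 1) / n)^(k+1) * D) (w i) (w j)}).comap
          (Sd _ n) := by
      conv_lhs => rw [Finsupp.supported_eq_span_single]
      rw [Submodule.span_le]
      rintro _ ⟨w, hw, rfl⟩
      refine Finsupp.supported_mono ?_ (Sd_mem w _ hw)
      rintro u ⟨_, hu⟩ i j
      have := hu i j
      rwa [← mul_assoc, ← pow_succ'] at this
    exact this ih

lemma SdI_realL {n m : ℕ} (c : LC n (Spx m)) (k : ℕ) :
    SdI n _ k (realL c) = realL (SdLI n m k c) := by
  induction k with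
  | zero => rfl
  | succ k ih => simp only [SdI, SdLI, LinearMap.comp_apply, ih, SdS_realL]

lemma near_one {m : ℕ} (x y : Spx m) : near 1 x y := by
  intro j
  rw [abs_le]
  constructor <;> linarith [stdSimplex.zero_le x j, stdSimplex.zero_le y j, stdSimplex.le_one x j,
    stdSimplex.le_one y j]

lemma single_small {n : ℕ} {U V : Set X} (hU : IsOpen U) (hV : IsOpen V) (σ : Sing n X)
    (hσ : ∀ t, σ t ∈ U ∪ V) : ∃ k, SdI n X k (Finsupp.single σ 1) ∈ CA n U ⊔ CA n V := by
  rcases Nat.eq_zero_or_pos n with rfl | hn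
  · refine ⟨0, Submodule.mem_sup_left ?_⟩
    exact Finsupp.single_mem_supported _ _
      (fun t => absurd t.2 (by simp [stdSimplex_of_isEmpty_index]))
  have hcov : ∀ x : Spx n, ∃ b : Bool, x ∈ σ ⁻¹' (cond b U V) := by
    intro x
    rcases hσ x with h | h
    · exact ⟨true, h⟩
    · exact ⟨false, h⟩
  obtain ⟨δ, hδ, hL⟩ := lebesgue_number_lemma_of_metric (s := (Set.univ : Set (Spx n)))
    (c := fun b : Bool => σ ⁻¹' (cond b U V)) isCompact_univ
    (fun b => by cases b; exacts [hV.preimage σ.continuous, hU.preimage σ.continuous])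
    (fun x _ => Set.mem_iUnion.2 (hcov x))
  have hn' : (0:ℝ) < n := by exact_mod_cast hn
  have h1 : (1:ℝ) ≤ n := by exact_mod_cast hn
  obtain ⟨k, hk⟩ := exists_pow_lt_of_lt_one hδ
    (show ((n : ℝ) - 1) / n < 1 by rw [div_lt_one hn']; linarith)
  refine ⟨k, ?_⟩
  rw [single_eq_push, ← push_SdI, SdI_realL]
  have hm := SdLI_mem (ev n) 1 (fun i j => near_one _ _) k
  have : Finsupp.supported ℚ ℚ
        {w : Fin n → Spx n | ∀ i j, near ((((n : ℝ) - 1) / n)^k * 1) (w i) (w j)} ≤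
      (CA n U ⊔ CA n V).comap (push σ ∘ₗ realL) := by
    rw [Finsupp.supported_eq_span_single, Submodule.span_le]
    rintro _ ⟨w, hw, rfl⟩
    show push σ (realL (Finsupp.single w 1)) ∈ CA n U ⊔ CA n V
    rw [realL_single, push_single]
    obtain ⟨b, hb⟩ := hL (w ⟨0, hn⟩) trivial
    have hall : ∀ t, σ (real w t) ∈ cond b U V := by
      intro t
      apply hb
      rw [Metric.mem_ball]
      refine lt_of_le_of_lt ?_ hk
      have hr : 0 ≤ (((n : ℝ) - 1) / n)^k := pow_nonneg (div_nonneg (by linarith) hn'.le) _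
      rw [Subtype.dist_eq, dist_pi_le_iff hr]
      intro j
      have := (near_scomb _ w (hw ⟨0, hn⟩) t).symm j
      rw [mul_one] at this
      exact this
    cases b
    · exact Submodule.mem_sup_right (Finsupp.single_mem_supported _ _ hall)
    · exact Submodule.mem_sup_left (Finsupp.single_mem_supported _ _ hall)
  exact this hm

lemma SdI_sup {n : ℕ} {U V : Set X} {c : Ch n X} (h : c ∈ CA n U ⊔ CA n V) (k : ℕ) :
    SdI n X k c ∈ CA n U ⊔ CA n V := by
  obtain ⟨a, ha, b, hb, rfl⟩ := Submodule.mem_sup.1 h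
  rw [map_add]
  exact Submodule.add_mem_sup (SdI_mem_CA ha k) (SdI_mem_CA hb k)

lemma SdI_add {n : ℕ} (c : Ch n X) (k l : ℕ) : SdI n X (k + l) c = SdI n X k (SdI n X l c) := by
  induction k with
  | zero => simp [SdI]
  | succ k ih => rw [Nat.succ_add]; simp only [SdI, LinearMap.comp_apply, ih]

lemma chain_small {n : ℕ} {U V : Set X} (hU : IsOpen U) (hV : IsOpen V) {c : Ch n X}
    (hc : c ∈ CA n (U ∪ V)) : ∃ k, SdI n X k c ∈ CA n U ⊔ CA n V := by
  rw [CA, Finsupp.supported_eq_span_single] at hc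
  induction hc using Submodule.span_induction with
  | mem x hx =>
    obtain ⟨σ, hσ, rfl⟩ := hx
    exact single_small hU hV σ hσ
  | zero => exact ⟨0, Submodule.zero_mem _⟩
  | add x y _ _ hx hy =>
    obtain ⟨k, hk⟩ := hx
    obtain ⟨l, hl⟩ := hy
    refine ⟨k + l, ?_⟩
    rw [map_add]
    refine Submodule.add_mem _ ?_ ?_
    · rw [add_comm, SdI_add]; exact SdI_sup hk _
    · rw [SdI_add]; exact SdI_sup hl _
  | smul a x _ hx =>
    obtain ⟨k, hk⟩ := hx
    exact ⟨k, by rw [map_smul]; exact Submodule.smul_mem _ _ hk⟩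

lemma CA_inter {n : ℕ} {U V : Set X} {c : Ch n X} (hU : c ∈ CA n U) (hV : c ∈ CA n V) :
    c ∈ CA n (U ∩ V) := fun _ hσ t => ⟨hU hσ t, hV hσ t⟩

/-! ### Punctured vector spaces -/

section vec
variable (E : Type) [NormedAddCommGroup E] [NormedSpace ℝ E]

def Pc : Set E := {0}ᶜ
def UU : Set (ℝ × E) := {p | p.2 ≠ 0 ∨ p.1 < 0}
def VV : Set (ℝ × E) := {p | p.2 ≠ 0 ∨ 0 < p.1}

lemma UU_open : IsOpen (UU E) :=
  (isOpen_ne_fun continuous_snd continuous_const).union (isOpen_lt continuous_fst continuous_const)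
lemma VV_open : IsOpen (VV E) :=
  (isOpen_ne_fun continuous_snd continuous_const).union (isOpen_lt continuous_const continuous_fst)

lemma UV_union : UU E ∪ VV E = Pc (ℝ × E) := by
  ext ⟨t, v⟩
  simp only [UU, VV, Pc, Set.mem_union, Set.mem_ofPred_eq, Set.mem_compl_iff, Set.mem_singleton_iff,
    Prod.mk_eq_zero]
  by_cases hv : v = 0
  · simp [hv]
  · simp [hv]

lemma UV_inter : UU E ∩ VV E = {p | p.2 ≠ 0} := by
  ext ⟨t, v⟩
  simp only [UU, VV, Set.mem_inter_iff, Set.mem_ofPred_eq]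
  constructor
  · rintro ⟨h | h, h' | h'⟩
    · exact h
    · exact h
    · exact h'
    · exact absurd h (by linarith)
  · intro h; exact ⟨Or.inl h, Or.inl h⟩

variable {E}

lemma UU_acyclic {n : ℕ} {z : Ch n (ℝ × E)} (hz : z ∈ CA n (UU E)) (hc : z ∈ cyc _ n) : Bds (UU E) z := by
  refine bds_contract (-1, 0) (Or.inr (by norm_num)) (fun p => (p.1 * p.2.1 - (1 - p.1), p.1 • p.2.2))
    (by fun_prop) (by simp) (by simp) ?_ hz hc
  rintro ⟨t, v⟩ h s hs0 hs1
  by_cases hs : s = 0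
  · subst hs; right; norm_num
  · have hs' : 0 < s := lt_of_le_of_ne hs0 (Ne.symm hs)
    rcases h with h | h
    · left; exact smul_ne_zero hs h
    · right
      have h' : t < 0 := h
      show s * t - (1 - s) < 0
      nlinarith

lemma VV_acyclic {n : ℕ} {z : Ch n (ℝ × E)} (hz : z ∈ CA n (VV E)) (hc : z ∈ cyc _ n) : Bds (VV E) z := by
  refine bds_contract (1, 0) (Or.inr (by norm_num)) (fun p => (p.1 * p.2.1 + (1 - p.1), p.1 • p.2.2))
    (by fun_prop) (by simp) (by simp) ?_ hz hc
  rintro ⟨t, v⟩ h s hs0 hs1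
  by_cases hs : s = 0
  · subst hs; right; norm_num
  · have hs' : 0 < s := lt_of_le_of_ne hs0 (Ne.symm hs)
    rcases h with h | h
    · left; exact smul_ne_zero hs h
    · right
      have h' : 0 < t := h
      show 0 < s * t + (1 - s)
      nlinarith

def refl (E : Type) [NormedAddCommGroup E] : C(ℝ × E, ℝ × E) := ⟨fun p => (-p.1, p.2), by fun_prop⟩

/-- A reflection acts by `-1`. -/
lemma refl_neg {n : ℕ} {z : Ch (n+1) (ℝ × E)} (hz : z ∈ CA (n+1) (Pc (ℝ × E)))
    (hc : z ∈ cyc _ (n+1)) : Bds (Pc (ℝ × E)) (push (refl E) z + z) := by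
  have hz' := hz
  rw [← UV_union] at hz'
  obtain ⟨k, hk⟩ := chain_small (UU_open E) (VV_open E) hz'
  obtain ⟨a, ha, b, hb, hab⟩ := Submodule.mem_sup.1 hk
  have hzk : bd n _ (SdI _ _ k z) = 0 := SdI_mem_cyc hc k
  have hbd : bd n _ a = - bd n _ b := by
    rw [← hab, map_add] at hzk
    exact eq_neg_of_add_eq_zero_left hzk
  set w := bd n _ a with hw
  have hwU : w ∈ CA n (UU E) := bd_mem_CA ha
  have hwV : w ∈ CA n (VV E) := by rw [hbd]; exact Submodule.neg_mem _ (bd_mem_CA hb)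
  have hwI := CA_inter hwU hwV
  have hwc : w ∈ cyc _ n := bd_mem_cyc _
  have hrw : Bds (UU E ∩ VV E) (w - push (refl E) w) := by
    have := bds_homotopy' (ContinuousMap.id _) (refl E) (fun p => ((2 * p.1 - 1) * p.2.1, p.2.2))
      (by fun_prop) (by intro x; simp [refl]) (by intro x; norm_num) (A := UU E ∩ VV E)
      (B := UU E ∩ VV E) (by
        rw [UV_inter]
        intro x hx s _ _
        exact hx) hwI hwc
    rwa [push_id] at this
  obtain ⟨P, hP, hPe⟩ := hrw
  have hrU : ∀ x ∈ VV E, refl E x ∈ UU E := by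
    rintro ⟨t, v⟩ (h | h)
    · exact Or.inl h
    · right
      have h' : 0 < t := h
      show -t < 0
      linarith
  have hrV : ∀ x ∈ UU E, refl E x ∈ VV E := by
    rintro ⟨t, v⟩ (h | h)
    · exact Or.inl h
    · right
      have h' : t < 0 := h
      show 0 < -t
      linarith
  have hbb : bd n _ b = - w := by rw [hbd, neg_neg]
  have h1 : Bds (UU E) (a + push (refl E) b - P) := by
    apply UU_acyclic
    · exact Submodule.sub_mem _ (Submodule.add_mem _ ha (push_mem_CA _ hrU hb))
        (CA_mono Set.inter_subset_left hP)
    · show bd n _ _ = 0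
      rw [map_sub, map_add, ← push_bd, hbb, hPe, map_neg, ← hw]
      abel
  have h2 : Bds (VV E) (b + push (refl E) a + P) := by
    apply VV_acyclic
    · exact Submodule.add_mem _ (Submodule.add_mem _ hb (push_mem_CA _ hrV ha))
        (CA_mono Set.inter_subset_right hP)
    · show bd n _ _ = 0
      rw [map_add, map_add, ← push_bd, hbb, hPe, ← hw]
      abel
  have hU : UU E ⊆ Pc (ℝ × E) := by rw [← UV_union]; exact Set.subset_union_left
  have hV : VV E ⊆ Pc (ℝ × E) := by rw [← UV_union]; exact Set.subset_union_right
  have h3 := (h1.mono hU).add (h2.mono hV)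
  have h4 := bds_SdI hz hc k
  have hrX : ∀ x ∈ Pc (ℝ × E), refl E x ∈ Pc (ℝ × E) := by
    rw [← UV_union]
    rintro x (h | h)
    · exact Or.inr (hrV x h)
    · exact Or.inl (hrU x h)
  have h5 := h4.push (refl E) hrX
  have := (h3.add h4).add h5
  rw [← hab] at this
  convert this using 1
  simp only [map_add, map_sub]
  abel

/-- nonvanishing of the top homology -/
def NV (n : ℕ) (E : Type) [NormedAddCommGroup E] : Prop :=
  ∃ z : Ch n E, z ∈ CA n (Pc E) ∧ z ∈ cyc E n ∧ ¬ Bds (Pc E) z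

lemma NV_succ {n : ℕ} (h : NV n E) : NV (n+1) (ℝ × E) := by
  obtain ⟨w, hw, hwc, hnb⟩ := h
  let j : C(E, ℝ × E) := ⟨fun v => (0, v), by fun_prop⟩
  let π : C(ℝ × E, E) := ⟨fun p => p.2, by fun_prop⟩
  have hj : ∀ x ∈ Pc E, j x ∈ UU E ∩ VV E := by
    rw [UV_inter]; intro x hx; exact hx
  have hπ : ∀ x ∈ UU E ∩ VV E, π x ∈ Pc E := by
    rw [UV_inter]; intro x hx; exact hx
  have hjw := push_mem_CA j hj hw
  have hjc := push_mem_cyc j hwc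
  obtain ⟨a, ha, hae⟩ := UU_acyclic (CA_mono Set.inter_subset_left hjw) hjc
  obtain ⟨b, hb, hbe⟩ := VV_acyclic (CA_mono Set.inter_subset_right hjw) hjc
  have hU : UU E ⊆ Pc (ℝ × E) := by rw [← UV_union]; exact Set.subset_union_left
  have hV : VV E ⊆ Pc (ℝ × E) := by rw [← UV_union]; exact Set.subset_union_right
  refine ⟨a - b, Submodule.sub_mem _ (CA_mono hU ha) (CA_mono hV hb), ?_, ?_⟩
  · show bd n _ _ = 0
    rw [map_sub, hae, hbe, sub_self]
  rintro ⟨c, hc, hce⟩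
  rw [← UV_union] at hc
  obtain ⟨k, hk⟩ := chain_small (UU_open E) (VV_open E) hc
  obtain ⟨c1, hc1, c2, hc2, hcc⟩ := Submodule.mem_sup.1 hk
  have e1 : SdI _ _ k a - bd _ _ c1 = SdI _ _ k b + bd _ _ c2 := by
    have : bd _ _ (SdI _ _ k c) = SdI _ _ k a - SdI _ _ k b := by rw [bd_SdI, hce, map_sub]
    rw [← hcc, map_add] at this
    rw [sub_eq_iff_eq_add, add_assoc, add_comm (bd _ _ c2), this]
    abel
  have he : SdI _ _ k a - bd _ _ c1 ∈ CA (n+1) (UU E ∩ VV E) := by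
    apply CA_inter
    · exact Submodule.sub_mem _ (SdI_mem_CA ha k) (bd_mem_CA hc1)
    · rw [e1]
      exact Submodule.add_mem _ (SdI_mem_CA hb k) (bd_mem_CA hc2)
  have hde : bd n _ (SdI _ _ k a - bd _ _ c1) = SdI _ _ k (push j w) := by
    rw [map_sub, bd_bd, sub_zero, bd_SdI, hae]
  have hB : Bds (Pc E) (SdI _ _ k w) := by
    refine ⟨push π (SdI _ _ k a - bd _ _ c1), push_mem_CA π hπ he, ?_⟩
    rw [← push_bd, hde, push_SdI, push_push]
    congr 1
    exact push_id w
  apply hnb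
  have := (bds_SdI hw hwc k).add hB
  simpa using this

lemma NV_equiv {n : ℕ} {F : Type} [NormedAddCommGroup F] [NormedSpace ℝ F] (e : E ≃L[ℝ] F)
    (h : NV n E) : NV n F := by
  obtain ⟨w, hw, hwc, hnb⟩ := h
  let f : C(E, F) := ⟨e, e.continuous⟩
  let g : C(F, E) := ⟨e.symm, e.symm.continuous⟩
  refine ⟨push f w, push_mem_CA f (A := Pc E) ?_ hw, push_mem_cyc f hwc, fun hb => hnb ?_⟩
  · intro x hx
    exact (map_ne_zero_iff e e.injective).2 hx
  · have := hb.push g (B := Pc E) (by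
      intro x hx
      exact (map_ne_zero_iff e.symm e.symm.injective).2 hx)
    rw [push_push] at this
    have hgf : g.comp f = ContinuousMap.id E := by ext x; simp [f, g]
    rwa [hgf, push_id] at this

lemma NV_zero : NV 0 (EuclideanSpace ℝ (Fin 0)) := by
  have hem : ∀ t : Spx 0, False := fun t => absurd t.2 (by simp [stdSimplex_of_isEmpty_index])
  refine ⟨Finsupp.single (ContinuousMap.const _ 0) 1, ?_, trivial, ?_⟩
  · exact Finsupp.single_mem_supported _ _ (fun t => (hem t).elim)
  · rintro ⟨c, hc, hce⟩
    have : c = 0 := by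
      have h0 : {σ : Sing 1 (EuclideanSpace ℝ (Fin 0)) | ∀ t, σ t ∈ Pc (EuclideanSpace ℝ (Fin 0))} = ∅ := by
        ext σ
        simp only [Set.mem_ofPred_eq, Set.mem_empty_iff_false, iff_false]
        intro h
        exact h (stdSimplex.vertex 0) (Subsingleton.elim _ _)
      rw [CA] at hc
      erw [h0, Finsupp.supported_empty] at hc
      exact hc
    rw [this, map_zero] at hce
    have := DFunLike.congr_fun hce (ContinuousMap.const _ 0)
    rw [Finsupp.single_eq_same] at this
    exact zero_ne_one this

lemma NV_euclid (n : ℕ) : NV n (EuclideanSpace ℝ (Fin n)) := by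
  induction n with
  | zero => exact NV_zero
  | succ n ih =>
    refine NV_equiv (ContinuousLinearEquiv.ofFinrankEq ?_) (NV_succ ih)
    simp [add_comm]

end vec

end
end SH

namespace SH
open Finset Cvx

noncomputable section

variable {X Y Z : Type} [TopologicalSpace X] [TopologicalSpace Y] [TopologicalSpace Z]

/-! ### The antipodal map -/

def negC (F : Type) [NormedAddCommGroup F] : C(F, F) := ⟨fun x => -x, continuous_neg⟩

lemma neg_prod {n : ℕ} {F : Type} [NormedAddCommGroup F] [NormedSpace ℂ F] [NormedSpace ℝ F]
    {z : Ch (n+1) (ℝ × F)} (hz : z ∈ CA (n+1) (Pc (ℝ × F))) (hc : z ∈ cyc _ (n+1)) :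
    Bds (Pc (ℝ × F)) (push (negC (ℝ × F)) z + z) := by
  have h1 := refl_neg hz hc
  have h2 := bds_homotopy' (negC (ℝ × F)) (refl F)
    (fun p => (-p.2.1, Complex.exp (Real.pi * p.1 * Complex.I) • p.2.2)) (by fun_prop)
    (by intro x; simp [refl]) (by
      intro x
      simp [negC, Complex.exp_pi_mul_I]
      rfl) (A := Pc (ℝ × F)) (B := Pc (ℝ × F)) (by
      intro x hx s _ _ h
      apply hx
      simp only [Set.mem_singleton_iff, Prod.mk_eq_zero, neg_eq_zero, smul_eq_zero,
        Complex.exp_ne_zero, false_or] at h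
      exact Prod.ext h.1 h.2) hz hc
  have := h2.add h1
  convert this using 1
  abel

lemma neg_euclid {d : ℕ} {z : Ch (2*d+1) (EuclideanSpace ℝ (Fin (2*d+1)))}
    (hz : z ∈ CA _ (Pc (EuclideanSpace ℝ (Fin (2*d+1))))) (hc : z ∈ cyc _ (2*d+1)) :
    Bds (Pc (EuclideanSpace ℝ (Fin (2*d+1)))) (push (negC _) z + z) := by
  let e : EuclideanSpace ℝ (Fin (2*d+1)) ≃L[ℝ] ℝ × (Fin d → ℂ) :=
    ContinuousLinearEquiv.ofFinrankEq (by
      simp [Module.finrank_prod, Module.finrank_pi_fintype, Complex.finrank_real_complex]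
      ring)
  let f : C(EuclideanSpace ℝ (Fin (2*d+1)), ℝ × (Fin d → ℂ)) := ⟨e, e.continuous⟩
  let g : C(ℝ × (Fin d → ℂ), EuclideanSpace ℝ (Fin (2*d+1))) := ⟨e.symm, e.symm.continuous⟩
  have h := neg_prod (push_mem_CA f (A := Pc _) (B := Pc _) (fun x hx =>
    (map_ne_zero_iff e e.injective).2 hx) hz) (push_mem_cyc f hc)
  have := h.push g (B := Pc _) (fun x hx =>
    (map_ne_zero_iff e.symm e.symm.injective).2 hx)
  rw [map_add, push_push, push_push, push_push] at this
  have e1 : g.comp f = ContinuousMap.id _ := by ext1 x; simp [f, g]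
  have e2 : (g.comp (negC _)).comp f = negC _ := by
    ext1 x; simp [f, g, negC]
  rw [e1, e2, push_id] at this
  exact this

/-! ### Subspaces -/

def incl (A : Set X) : C(A, X) := ⟨Subtype.val, continuous_subtype_val⟩

lemma lift_CA {n : ℕ} {A : Set X} {c : Ch n X} (hc : c ∈ CA n A) :
    ∃ c' : Ch n A, push (incl A) c' = c := by
  rw [CA, Finsupp.supported_eq_span_single] at hc
  induction hc using Submodule.span_induction with
  | mem x h =>
    obtain ⟨σ, hσ, rfl⟩ := h
    refine ⟨Finsupp.single ⟨fun t => ⟨σ t, hσ t⟩, by fun_prop⟩ 1, ?_⟩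
    rw [push_single]
    congr 1
  | zero => exact ⟨0, map_zero _⟩
  | add x y _ _ hx hy =>
    obtain ⟨a, rfl⟩ := hx
    obtain ⟨b, rfl⟩ := hy
    exact ⟨a + b, map_add _ _ _⟩
  | smul q x _ hx =>
    obtain ⟨a, rfl⟩ := hx
    exact ⟨q • a, map_smul _ _ _⟩

lemma push_incl_inj {n : ℕ} (A : Set X) : Function.Injective (push (n := n) (incl A)) := by
  apply Finsupp.mapDomain_injective
  intro σ τ h
  ext t
  exact congrArg (fun u : Sing n X => u t) h

lemma Bds_sub {n : ℕ} {A : Set X} {z : Ch n A} (h : Bds A (push (incl A) z)) :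
    Bds Set.univ z := by
  obtain ⟨c, hc, hb⟩ := h
  obtain ⟨c', rfl⟩ := lift_CA hc
  rw [← push_bd] at hb
  exact ⟨c', mem_CA_univ _, push_incl_inj A hb⟩

lemma cyc_sub {n : ℕ} {A : Set X} {z : Ch n A} (h : push (incl A) z ∈ cyc X n) :
    z ∈ cyc A n := by
  cases n with
  | zero => trivial
  | succ n =>
    have h' : bd n X (push (incl A) z) = 0 := h
    rw [← push_bd] at h'
    exact push_incl_inj A (h'.trans (map_zero _).symm)

/-! ### The sphere -/
section sphere
variable (E : Type) [NormedAddCommGroup E] [NormedSpace ℝ E]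

abbrev Sph : Set E := Metric.sphere (0 : E) 1

def nrm : C(Pc E, Sph E) :=
  ⟨fun x => ⟨‖(x : E)‖⁻¹ • (x : E), by
    have : (x : E) ≠ 0 := x.2
    simp [norm_smul, this]⟩, by
    apply Continuous.subtype_mk
    exact (Continuous.inv₀ (by fun_prop) (fun x => norm_ne_zero_iff.2 x.2)).smul (by fun_prop)⟩

lemma sph_ne (x : Sph E) : (x : E) ≠ 0 := ne_zero_of_mem_unit_sphere x

def inP : C(Sph E, Pc E) := ⟨fun x => ⟨x, sph_ne E x⟩, by fun_prop⟩

def anti : C(Sph E, Sph E) := ⟨fun x => -x, by fun_prop⟩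

variable {E}

lemma nrm_inP : (nrm E).comp (inP E) = ContinuousMap.id _ := by
  ext x
  simp [nrm, inP]

lemma sphere_nv {n : ℕ} (h : NV n E) : ∃ z : Ch n (Sph E), z ∈ cyc _ n ∧ ¬ Bds Set.univ z := by
  obtain ⟨z, hz, hc, hb⟩ := h
  obtain ⟨z', rfl⟩ := lift_CA hz
  have hc' := cyc_sub hc
  refine ⟨push (nrm E) z', push_mem_cyc _ hc', fun h => hb ?_⟩
  have h1 := h.push (incl (Sph E)) (B := Pc E) (fun x _ => sph_ne E x)
  rw [push_push] at h1
  have h2 := bds_homotopy' (incl (Pc E)) ((incl (Sph E)).comp (nrm E))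
    (fun p : ℝ × Pc E => ((1 - p.1) * ‖(p.2 : E)‖⁻¹ + p.1) • (p.2 : E)) (by
      refine Continuous.smul (Continuous.add (Continuous.mul (by fun_prop) ?_) (by fun_prop)) (by fun_prop)
      exact (Continuous.inv₀ (by fun_prop) (fun x => norm_ne_zero_iff.2 x.2.2)))
    (by intro x; simp [incl, nrm]) (by intro x; simp [incl]) (A := Set.univ) (B := Pc E) (by
      intro x _ s h0 h1
      have hx : (x : E) ≠ 0 := x.2
      have hp : 0 < ‖(x : E)‖⁻¹ := by positivity
      refine smul_ne_zero (ne_of_gt ?_) hx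
      rcases h0.eq_or_lt with rfl | h0
      · simpa using hp
      · have : 0 ≤ (1 - s) * ‖(x : E)‖⁻¹ := mul_nonneg (by linarith) hp.le
        linarith) (mem_CA_univ z') hc'
  simpa using h2.add h1

lemma sphere_anti {d : ℕ} {z : Ch (2*d+1) (Sph (EuclideanSpace ℝ (Fin (2*d+1))))}
    (hc : z ∈ cyc _ (2*d+1)) : Bds Set.univ (push (anti _) z + z) := by
  have h := neg_euclid (push_mem_CA (incl (Sph (EuclideanSpace ℝ (Fin (2*d+1))))) (A := Set.univ)
    (B := Pc _) (fun x _ => sph_ne _ x) (mem_CA_univ z)) (push_mem_cyc _ hc)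
  have h' : Bds (Pc (EuclideanSpace ℝ (Fin (2*d+1)))) (push (incl _) (push (inP _) (push (anti _) z + z))) := by
    rw [map_add, map_add]
    simp only [push_push] at h ⊢
    exact h
  have := (Bds_sub h').push (nrm _) (B := Set.univ) (fun _ _ => trivial)
  rwa [push_push, nrm_inP, push_id] at this

end sphere
end
end SH

namespace SH
open Finset Cvx

noncomputable section

variable {X Y Z : Type} [TopologicalSpace X] [TopologicalSpace Y] [TopologicalSpace Z]

/-! ### Transfer for a double covering -/

structure Dbl (p : C(X, Y)) (g : C(X, X)) : Prop where
  cov : IsCoveringMap p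
  surj : Function.Surjective p
  fib : ∀ x y, p x = p y ↔ (y = x ∨ y = g x)
  inv : ∀ x, g (g x) = x

lemma spx_contr (n : ℕ) : ContractibleSpace (Spx (n+1)) :=
  (convex_stdSimplex ℝ (Fin (n+1))).contractibleSpace ⟨_, (stdSimplex.vertex 0 : Spx (n+1)).2⟩

lemma spx_lpc (n : ℕ) : LocallyPathConnectedSpace (Spx (n+1)) :=
  (convex_stdSimplex ℝ (Fin (n+1))).locallyPathConnectedSpace

lemma Dbl.lift {p : C(X, Y)} {g : C(X, X)} (h : Dbl p g) {n : ℕ} (σ : Sing (n+1) Y) :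
    ∃ τ : Sing (n+1) X, p.comp τ = σ := by
  have := spx_contr n
  have := spx_lpc n
  obtain ⟨x, hx⟩ := h.surj (σ (stdSimplex.vertex 0))
  obtain ⟨τ, ⟨_, hτ⟩, _⟩ := h.cov.existsUnique_continuousMap_lifts σ _ x hx
  exact ⟨τ, by ext t; exact congrFun hτ t⟩

lemma Dbl.uniq {p : C(X, Y)} {g : C(X, X)} (h : Dbl p g) {n : ℕ} {τ τ' : Sing (n+1) X}
    (e : p.comp τ = p.comp τ') : τ' = τ ∨ τ' = g.comp τ := by
  have := spx_contr n
  have e' : ∀ t, p (τ t) = p (τ' t) := fun t => congrArg (fun u : Sing (n+1) Y => u t) e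
  rcases (h.fib _ _).1 (e' (stdSimplex.vertex 0)) with h1 | h1
  · left
    apply DFunLike.coe_injective
    exact h.cov.eq_of_comp_eq τ'.continuous τ.continuous (funext fun t => (e' t).symm) _ h1
  · right
    apply DFunLike.coe_injective
    refine h.cov.eq_of_comp_eq τ'.continuous (g.comp τ).continuous (funext fun t => ?_) _ h1
    exact (e' t).symm.trans ((h.fib _ _).2 (Or.inr rfl))

def tr {p : C(X, Y)} {g : C(X, X)} (h : Dbl p g) (n : ℕ) : Ch (n+1) Y →ₗ[ℚ] Ch (n+1) X :=
  Finsupp.linearCombination ℚ (fun σ : Sing (n+1) Y =>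
    (Finsupp.single (h.lift σ).choose 1 + Finsupp.single (g.comp (h.lift σ).choose) 1 : Ch (n+1) X))

lemma tr_single {p : C(X, Y)} {g : C(X, X)} (h : Dbl p g) {n : ℕ} (τ : Sing (n+1) X) :
    tr h n (Finsupp.single (p.comp τ) 1) = Finsupp.single τ 1 + Finsupp.single (g.comp τ) 1 := by
  rw [tr, Finsupp.linearCombination_single, one_smul]
  rcases h.uniq (h.lift (p.comp τ)).choose_spec with e | e
  · rw [← e]
  · have : g.comp τ = (h.lift (p.comp τ)).choose := by
      nth_rewrite 1 [e]
      ext t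
      exact h.inv _
    rw [← this]
    have h2 : g.comp (g.comp τ) = τ := by ext t; exact h.inv _
    rw [h2]
    exact add_comm _ _

lemma bd_tr {p : C(X, Y)} {g : C(X, X)} (h : Dbl p g) {n : ℕ} (c : Ch (n+2) Y) :
    bd (n+1) X (tr h (n+1) c) = tr h n (bd (n+1) Y c) := by
  have : (bd (n+1) X) ∘ₗ tr h (n+1) = tr h n ∘ₗ bd (n+1) Y := by
    apply ch_ext
    intro σ
    obtain ⟨τ, rfl⟩ := h.lift σ
    simp only [LinearMap.comp_apply]
    rw [tr_single, map_add, bd_single, bd_single, bd_single, map_sum, ← Finset.sum_add_distrib]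
    refine Finset.sum_congr rfl fun i _ => ?_
    rw [map_smul, ← smul_add]
    congr 1
    exact (tr_single h (τ.comp (face i))).symm
  exact congrArg (fun f : Ch (n+2) Y →ₗ[ℚ] Ch (n+1) X => f c) this

lemma tr_cyc {p : C(X, Y)} {g : C(X, X)} (h : Dbl p g) {m n : ℕ} (hm : m = n + 1)
    {z : Ch (m+1) Y} (hz : z ∈ cyc Y (m+1)) : tr h m z ∈ cyc X (m+1) := by
  subst hm
  have hz' : bd _ _ z = 0 := hz
  show bd _ _ (tr h (n+1) z) = 0
  rw [bd_tr, hz', map_zero]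

lemma push_tr {p : C(X, Y)} {g : C(X, X)} (h : Dbl p g) {n : ℕ} (c : Ch (n+1) Y) :
    push p (tr h n c) = (2 : ℚ) • c := by
  have : push p ∘ₗ tr h n = (2 : ℚ) • LinearMap.id := by
    apply ch_ext
    intro σ
    obtain ⟨τ, rfl⟩ := h.lift σ
    simp only [LinearMap.comp_apply]
    rw [tr_single, map_add, push_single, push_single]
    have : p.comp (g.comp τ) = p.comp τ := by
      ext t; exact ((h.fib _ _).2 (Or.inr rfl)).symm
    rw [this, LinearMap.smul_apply, LinearMap.id_apply, two_smul]
  exact congrArg (fun f : Ch (n+1) Y →ₗ[ℚ] Ch (n+1) Y => f c) this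

/-! ### Configuration spaces -/
section conf
variable (M : Type) [TopologicalSpace M]

abbrev OC (k : ℕ) : Type := {f : Fin k → M // Function.Injective f}

instance confAct (k : ℕ) : MulAction (Equiv.Perm (Fin k)) (OC M k) where
  smul σ f := ⟨f.1 ∘ ⇑σ⁻¹, f.2.comp (σ⁻¹).injective⟩
  one_smul f := rfl
  mul_smul σ τ f := by
    apply Subtype.ext
    show f.1 ∘ ⇑(σ * τ)⁻¹ = (f.1 ∘ ⇑τ⁻¹) ∘ ⇑σ⁻¹
    rw [mul_inv_rev]; rfl

def confMk (k : ℕ) : C(OC M k, UnordConfigSpace M k) :=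
  ⟨Quotient.mk (configSetoid M k), continuous_quotient_mk'⟩

lemma confMk_eq {k : ℕ} (f g : OC M k) :
    confMk M k f = confMk M k g ↔ ∃ σ : Equiv.Perm (Fin k), f.1 ∘ σ = g.1 :=
  Quotient.eq (r := configSetoid M k)

lemma conf_cov [T2Space M] (k : ℕ) : IsCoveringMap (confMk M k) := by
  have hq : Topology.IsQuotientMap (confMk M k) := isQuotientMap_quotient_mk'
  suffices h : IsQuotientCoveringMap (confMk M k) (Equiv.Perm (Fin k)) from h.isCoveringMap
  refine { hq with continuous_const_smul := ?_, apply_eq_iff_mem_orbit := ?_, disjoint := ?_ }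
  · intro σ
    apply Continuous.subtype_mk
    refine continuous_pi fun i => ?_
    exact (continuous_apply _).comp continuous_subtype_val
  · intro f g
    rw [confMk_eq]
    constructor
    · rintro ⟨σ, h⟩
      refine ⟨σ, Subtype.ext ?_⟩
      show g.1 ∘ ⇑σ⁻¹ = f.1
      rw [← h]
      ext i
      simp
    · rintro ⟨σ, rfl⟩
      refine ⟨σ, ?_⟩
      show (g.1 ∘ ⇑σ⁻¹) ∘ ⇑σ = g.1
      ext i
      simp
  · intro f
    obtain ⟨U, hU, hd⟩ := (Set.finite_range f.1).t2_separation
    refine ⟨{h | ∀ i, h.1 i ∈ U (f.1 i)}, ?_, ?_⟩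
    · apply IsOpen.mem_nhds
      · rw [Set.setOf_forall]
        exact isOpen_iInter_of_finite fun i =>
          (hU _).2.preimage ((continuous_apply i).comp continuous_subtype_val)
      · exact fun i => (hU _).1
    · rintro σ ⟨_, ⟨h, hh, rfl⟩, h2⟩
      have : σ⁻¹ = 1 := by
        ext1 i
        by_contra hne
        have h3 : h.1 (σ⁻¹ i) ∈ U (f.1 i) := h2 i
        have h4 : h.1 (σ⁻¹ i) ∈ U (f.1 (σ⁻¹ i)) := hh _
        exact Set.disjoint_left.1 (hd (Set.mem_range_self _) (Set.mem_range_self _)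
          (fun e => hne (f.2 e))) h4 h3
      simpa using this

def swp : C(OC M 2, OC M 2) :=
  ⟨fun f => ⟨f.1 ∘ ⇑(Equiv.swap (0 : Fin 2) 1), f.2.comp (Equiv.injective _)⟩, by
    apply Continuous.subtype_mk
    refine continuous_pi fun i => ?_
    exact (continuous_apply _).comp continuous_subtype_val⟩

lemma conf_dbl [T2Space M] : Dbl (confMk M 2) (swp M) where
  cov := conf_cov M 2
  surj := Quotient.mk_surjective
  fib f g := by
    rw [confMk_eq]
    have hp : ∀ σ : Equiv.Perm (Fin 2), σ = 1 ∨ σ = Equiv.swap 0 1 := by decide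
    constructor
    · rintro ⟨σ, h⟩
      rcases hp σ with rfl | rfl
      · left; exact Subtype.ext h.symm
      · right; exact Subtype.ext h.symm
    · rintro (rfl | rfl)
      · exact ⟨1, rfl⟩
      · exact ⟨Equiv.swap 0 1, rfl⟩
  inv f := by
    apply Subtype.ext
    ext i
    simp [swp]

end conf

section sphere
variable (E : Type) [NormedAddCommGroup E] [InnerProductSpace ℝ E]

lemma pair_ne {M : Type} {x y : M} (h : x ≠ y) : Function.Injective ![x, y] := by
  intro i j
  fin_cases i <;> fin_cases j <;> simp [h, h.symm]

lemma oc_ne {M : Type} (f : {f : Fin 2 → M // Function.Injective f}) : f.1 0 ≠ f.1 1 := fun h => by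
  have := f.2 h
  simp at this

lemma sub_smul_ne {x y : Sph E} (h : x ≠ y) {s : ℝ} (hs : 0 ≤ s) :
    (x : E) - s • (y : E) ∈ Pc E := by
  intro e
  have e : (x : E) = s • (y : E) := sub_eq_zero.1 e
  have h1 : ‖(x : E)‖ = 1 := by simpa using x.2
  have h2 : ‖(y : E)‖ = 1 := by simpa using y.2
  have : s = 1 := by
    rw [e, norm_smul, h2, mul_one, Real.norm_of_nonneg hs] at h1
    exact h1
  rw [this, one_smul] at e
  exact h (Subtype.ext e)

lemma nrm_pair_ne {x y : Sph E} (h : x ≠ y) {s : ℝ} (hs : 0 ≤ s) :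
    nrm E ⟨_, sub_smul_ne E h hs⟩ ≠ nrm E ⟨_, sub_smul_ne E h.symm hs⟩ := by
  intro e
  have e : ‖(x : E) - s • (y : E)‖⁻¹ • ((x : E) - s • (y : E)) =
    ‖(y : E) - s • (x : E)‖⁻¹ • ((y : E) - s • (x : E)) := congrArg Subtype.val e
  have h1 : ‖(x : E)‖ = 1 := by simpa using x.2
  have h2 : ‖(y : E)‖ = 1 := by simpa using y.2
  have hn : ‖(x : E) - s • (y : E)‖ = ‖(y : E) - s • (x : E)‖ := by
    rw [← sq_eq_sq₀ (norm_nonneg _) (norm_nonneg _), norm_sub_sq_real, norm_sub_sq_real,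
      norm_smul, norm_smul, h1, h2, inner_smul_right, inner_smul_right, real_inner_comm]
  have h0 : ‖(y : E) - s • (x : E)‖ ≠ 0 := norm_ne_zero_iff.2 (sub_smul_ne E h.symm hs)
  rw [hn] at e
  have e := smul_right_injective E (inv_ne_zero h0) e
  have : (1 + s) • ((x : E) - y) = 0 := by
    have := sub_eq_zero.2 e
    rw [← this]
    module
  rcases smul_eq_zero.1 this with h3 | h3
  · linarith
  · exact h (Subtype.ext (sub_eq_zero.1 h3))

lemma t_nonneg (t : Spx 2) : 0 ≤ t 1 := stdSimplex.zero_le t 1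

def homo : C(OC (Sph E) 2 × Spx 2, OC (Sph E) 2) :=
  ⟨fun p => ⟨![nrm E ⟨(p.1.1 0 : E) - p.2 1 • (p.1.1 1 : E), sub_smul_ne E (oc_ne p.1) (t_nonneg p.2)⟩,
      nrm E ⟨(p.1.1 1 : E) - p.2 1 • (p.1.1 0 : E), sub_smul_ne E (oc_ne p.1).symm (t_nonneg p.2)⟩],
      pair_ne (nrm_pair_ne E (oc_ne p.1) (t_nonneg p.2))⟩, by
    have c0 : ∀ i, Continuous fun p : OC (Sph E) 2 × Spx 2 => (p.1.1 i : E) := fun i =>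
      continuous_subtype_val.comp ((continuous_apply i).comp (continuous_subtype_val.comp continuous_fst))
    have c1 : Continuous fun p : OC (Sph E) 2 × Spx 2 => p.2 1 :=
      (continuous_apply (1 : Fin 2)).comp (continuous_subtype_val.comp continuous_snd)
    apply Continuous.subtype_mk
    refine continuous_pi fun i => ?_
    fin_cases i
    · exact (nrm E).continuous.comp (((c0 0).sub (c1.smul (c0 1))).subtype_mk _)
    · exact (nrm E).continuous.comp (((c0 1).sub (c1.smul (c0 0))).subtype_mk _)⟩

def toS : C(OC (Sph E) 2, Sph E) :=
  ⟨fun f => (homo E (f, stdSimplex.vertex 1)).1 0,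
    (continuous_apply (0 : Fin 2)).comp (continuous_subtype_val.comp (by fun_prop))⟩

lemma ne_neg_sph (x : Sph E) : x ≠ -x := by
  intro h
  have h : (x : E) = -(x : E) := congrArg Subtype.val h
  have h2 : (2 : ℝ) • (x : E) = 0 := by
    rw [two_smul]
    nth_rewrite 2 [h]
    exact add_neg_cancel _
  exact sph_ne E x ((smul_eq_zero.1 h2).resolve_left two_ne_zero)

def fromS : C(Sph E, OC (Sph E) 2) :=
  ⟨fun x => ⟨![x, -x], pair_ne (ne_neg_sph E x)⟩, by
    apply Continuous.subtype_mk
    refine continuous_pi fun i => ?_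
    fin_cases i
    · exact continuous_id
    · exact continuous_neg⟩

lemma homo_end1 : end1 (homo E) = (fromS E).comp (toS E) := by
  ext1 f
  apply Subtype.ext
  ext1 i
  fin_cases i
  · rfl
  · apply Subtype.ext
    simp [end1, homo, fromS, toS, nrm]
    rw [norm_sub_rev, ← smul_neg, neg_sub]

lemma homo_end0 : end0 (homo E) = ContinuousMap.id _ := by
  ext1 f
  apply Subtype.ext
  ext1 i
  fin_cases i
  · apply Subtype.ext
    simp [end0, homo, nrm]
  · apply Subtype.ext
    simp [end0, homo, nrm]

end sphere

lemma conf2_bds {d n : ℕ} (hn : 2 * d = n + 1)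
    {z : Ch (2*d+1) (UnordConfigSpace (Sph (EuclideanSpace ℝ (Fin (2*d+1)))) 2)}
    (hz : z ∈ cyc _ (2*d+1)) : Bds Set.univ z := by
  set E := EuclideanSpace ℝ (Fin (2*d+1)) with hE
  have hD := conf_dbl (Sph E)
  have hy : tr hD (2*d) z ∈ cyc _ (2*d+1) := tr_cyc hD hn hz
  set y := tr hD (2*d) z with hyd
  have h2z : push (confMk (Sph E) 2) y = (2 : ℚ) • z := push_tr hD z
  have h1 := bds_homotopy (homo E) (A := Set.univ) (B := Set.univ) (fun _ _ _ => trivial)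
    (mem_CA_univ y) hy
  rw [homo_end1, homo_end0, push_id] at h1
  have h1 := h1.push (confMk (Sph E) 2) (B := Set.univ) (fun _ _ => trivial)
  have h2 := (sphere_anti (push_mem_cyc (toS E) hy)).push ((confMk (Sph E) 2).comp (fromS E))
    (B := Set.univ) (fun _ _ => trivial)
  have e : ((confMk (Sph E) 2).comp (fromS E)).comp (anti E) = (confMk (Sph E) 2).comp (fromS E) := by
    ext1 x
    refine (confMk_eq _ _ _).2 ⟨Equiv.swap 0 1, ?_⟩
    ext1 i
    fin_cases i <;> simp [fromS, anti]
  rw [map_add, push_push, e] at h2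
  rw [map_sub, h2z, ← push_push, push_push] at h1
  have h3 := (h2.smul (1/4)).sub (h1.smul (1/2))
  convert h3 using 1
  module

/-! ### One point configurations -/

lemma conf1_nv {M : Type} [TopologicalSpace M] {n : ℕ} {z : Ch n M} (hz : z ∈ cyc M n)
    (hb : ¬ Bds Set.univ z) :
    ∃ w : Ch n (UnordConfigSpace M 1), w ∈ cyc _ n ∧ ¬ Bds Set.univ w := by
  let i : C(M, UnordConfigSpace M 1) := (confMk M 1).comp
    ⟨fun x => ⟨fun _ => x, Function.injective_of_subsingleton _⟩, by fun_prop⟩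
  let r : C(UnordConfigSpace M 1, M) := ⟨Quotient.lift (s := configSetoid M 1) (fun f => f.1 0) (by
    rintro f g ⟨σ, h⟩
    rw [← h]
    exact congrArg f.1 (Subsingleton.elim _ _)), by
    apply Continuous.quotient_lift
    exact (continuous_apply (0 : Fin 1)).comp continuous_subtype_val⟩
  refine ⟨push i z, push_mem_cyc i hz, fun h => hb ?_⟩
  have := h.push r (B := Set.univ) (fun _ _ => trivial)
  rw [push_push] at this
  have e : r.comp i = ContinuousMap.id M := by ext x; rfl
  rwa [e, push_id] at this

end
end SH

namespace SH
open Finset Cvx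

noncomputable section

/-! ### Comparison with the homology of the singular chain complex -/

variable (X : Type) [TopologicalSpace X]

abbrev KX : ChainComplex (ModuleCat.{0} ℚ) ℕ := (singularChainComplexFunctor ℚ).obj (TopCat.of X)

abbrev TS : SSet.{0} := TopCat.toSSet.obj (TopCat.of X)

def simpE (m : ℕ) : (TS X).obj (Opposite.op (SimplexCategory.mk m)) ≃ Sing (m+1) X :=
  TopCat.toSSetObjEquiv (TopCat.of X) _

def chE (m : ℕ) : (KX X).X m ≃ₗ[ℚ] Ch (m+1) X :=
  Finsupp.domLCongr (simpE X m)

lemma simpE_face (m : ℕ) (i : Fin (m+2)) (s : (TS X).obj (Opposite.op (SimplexCategory.mk (m+1)))) :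
    simpE X m ((TS X).δ i s) = (simpE X (m+1) s).comp (face i) := by
  ext t
  rfl

def freeE (m : ℕ) (s : (TS X).obj (Opposite.op (SimplexCategory.mk m))) : (KX X).X m :=
  Finsupp.single s 1

lemma chE_free (m : ℕ) (s : (TS X).obj (Opposite.op (SimplexCategory.mk m))) :
    chE X m (freeE X m s) = Finsupp.single (simpE X m s) 1 :=
  Finsupp.domLCongr_single _ _ _

lemma sum_apply_aux {A B : ModuleCat.{0} ℚ} {n : ℕ} (a : Fin n → ℤ) (f : Fin n → (A ⟶ B)) (x : A) :
    (∑ i, a i • f i).hom x = ∑ i, a i • (f i).hom x := by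
  simp [ModuleCat.hom_sum, LinearMap.sum_apply]

lemma d_free (m : ℕ) (s : (TS X).obj (Opposite.op (SimplexCategory.mk (m+1)))) :
    (KX X).d (m+1) m (freeE X (m+1) s) =
      ∑ i : Fin (m+2), (-1 : ℤ) ^ (i : ℕ) • freeE X m ((TS X).δ i s) := by
  have h : (KX X).d (m+1) m = ∑ i : Fin (m+2), (-1 : ℤ) ^ (i : ℕ) •
      (((SimplicialObject.whiskering _ _).obj (ModuleCat.free ℚ)).obj (TS X)).δ i :=
    AlgebraicTopology.AlternatingFaceMapComplex.obj_d_eq _ _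
  refine (congrArg (fun f : (KX X).X (m+1) ⟶ (KX X).X m => f.hom (freeE X (m+1) s)) h).trans ?_
  refine (sum_apply_aux _ _ _).trans ?_
  refine Finset.sum_congr rfl fun i _ => ?_
  exact congrArg (fun y : (KX X).X m => (-1 : ℤ) ^ (i : ℕ) • y)
    (ModuleCat.free_map_apply (R := ℚ) ((TS X).δ i) s)

lemma chE_d (m : ℕ) (c : (KX X).X (m+1)) :
    chE X m ((KX X).d (m+1) m c) = bd (m+1) X (chE X (m+1) c) := by
  have : (chE X m).toLinearMap ∘ₗ ((KX X).d (m+1) m).hom = bd (m+1) X ∘ₗ (chE X (m+1)).toLinearMap := by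
    apply Finsupp.lhom_ext'
    intro s
    apply LinearMap.ext_ring
    show chE X m ((KX X).d (m+1) m (freeE X (m+1) s)) = bd (m+1) X (chE X (m+1) (freeE X (m+1) s))
    rw [d_free, map_sum, chE_free, bd_single]
    refine Finset.sum_congr rfl fun i _ => ?_
    rw [map_zsmul, chE_free, simpE_face, ← Int.cast_smul_eq_zsmul ℚ]
    simp
  exact congrArg (fun f : (KX X).X (m+1) →ₗ[ℚ] Ch (m+1) X => f c) this

lemma homology_zero_iff (m : ℕ) : Subsingleton (SingularHomology ℚ (m+1) X) ↔
    ∀ z : Ch (m+2) X, z ∈ cyc X (m+2) → Bds Set.univ z := by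
  have h1 : Subsingleton (SingularHomology ℚ (m+1) X) ↔ (KX X).ExactAt (m+1) := by
    rw [HomologicalComplex.exactAt_iff_isZero_homology]
    exact (ModuleCat.isZero_iff_subsingleton (M := SingularHomology ℚ (m+1) X)).symm
  rw [h1, HomologicalComplex.exactAt_iff' _ (m+2) (m+1) m (by simp) (by simp),
    ShortComplex.moduleCat_exact_iff]
  show (∀ x : (KX X).X (m+1), (KX X).d (m+1) m x = 0 →
    ∃ y : (KX X).X (m+2), (KX X).d (m+2) (m+1) y = x) ↔ _
  constructor
  · intro h z hz
    have hz' : bd (m+1) X z = 0 := hz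
    obtain ⟨c, hc⟩ := h ((chE X (m+1)).symm z) (by
      apply (chE X m).injective
      refine (chE_d X m _).trans ?_
      rw [LinearEquiv.apply_symm_apply, hz', map_zero])
    refine ⟨chE X (m+2) c, mem_CA_univ _, ?_⟩
    rw [← chE_d]
    exact (congrArg (chE X (m+1)) hc).trans (LinearEquiv.apply_symm_apply _ _)
  · intro h z hz
    have hz' : (KX X).d (m+1) m z = 0 := hz
    obtain ⟨c, -, hc⟩ := h (chE X (m+1) z) (by
      show bd (m+1) X _ = 0
      rw [← chE_d, hz', map_zero])
    refine ⟨(chE X (m+2)).symm c, ?_⟩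
    apply (chE X (m+1)).injective
    refine (chE_d X (m+1) _).trans ?_
    rw [LinearEquiv.apply_symm_apply, hc]

end
end SH

/-- For every `d ≥ 1`, the function `k ↦ dim_ℚ H_{2d}(C_k(S^{2d}); ℚ)` is not
monotonically increasing: there exists `k ≥ 1` with
`dim_ℚ H_{2d}(C_k(S^{2d}); ℚ) > dim_ℚ H_{2d}(C_{k+1}(S^{2d}); ℚ)`. -/
theorem homology_of_configuration_spaces_of_even_sphere_not_monotone
    (d : ℕ) (hd : 1 ≤ d) :
    ∃ k : ℕ, 1 ≤ k ∧
      Module.rank ℚ (SingularHomology ℚ (2 * d)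
        (UnordConfigSpace ↥(Metric.sphere (0 : EuclideanSpace ℝ (Fin (2 * d + 1))) 1) (k + 1))) <
      Module.rank ℚ (SingularHomology ℚ (2 * d)
        (UnordConfigSpace ↥(Metric.sphere (0 : EuclideanSpace ℝ (Fin (2 * d + 1))) 1) k)) := by
  obtain ⟨m, hm⟩ : ∃ m, 2 * d = m + 1 := ⟨2 * d - 1, by omega⟩
  refine ⟨1, le_rfl, ?_⟩
  have key : ∀ (Y : Type) [TopologicalSpace Y], Subsingleton (SingularHomology ℚ (2 * d) Y) ↔
      ∀ z : SH.Ch (2 * d + 1) Y, z ∈ SH.cyc Y (2 * d + 1) → SH.Bds Set.univ z := by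
    rw [hm]
    intro Y _
    exact SH.homology_zero_iff Y m
  have h2 := (key (UnordConfigSpace ↥(Metric.sphere (0 : EuclideanSpace ℝ (Fin (2 * d + 1))) 1) 2)).2
    (fun z hz => SH.conf2_bds hm hz)
  have h1 : Nontrivial (SingularHomology ℚ (2 * d)
      (UnordConfigSpace ↥(Metric.sphere (0 : EuclideanSpace ℝ (Fin (2 * d + 1))) 1) 1)) := by
    rw [← not_subsingleton_iff_nontrivial, key]
    intro h
    obtain ⟨z, hz, hb⟩ := SH.sphere_nv (SH.NV_euclid (2 * d + 1))
    obtain ⟨w, hw, hwb⟩ := SH.conf1_nv hz hb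
    exact hwb (h w hw)
  have e : Module.rank ℚ (SingularHomology ℚ (2 * d)
      (UnordConfigSpace ↥(Metric.sphere (0 : EuclideanSpace ℝ (Fin (2 * d + 1))) 1) (1 + 1))) = 0 :=
    rank_subsingleton' ℚ _
  rw [e]
  exact rank_pos_iff_nontrivial.2 h1
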